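/- arXiv:2501.00716 — 9 statements merged into one kernel-verified Lean document; each statement's English description precedes it below -/
import Mathlib

section
/- Let f be a complex-analytic function defined on a neighborhood of b ∈ ℂ with f(b) = a and f'(b) ≠ 0, and let h be the analytic function defined near b by h(y) = (y − b)/(f(y) − a) for y ≠ b and h(b) = 1/f'(b). Then there exist r > 0 and an analytic function g on the disc {x : |x − a| < r} with g(a) = b and f(g(x)) = x for all x in the disc, and for every such x one has g(x) = b + ∑_{k=1}^∞ (d^{k−1}/dy^{k−1})(h(y)^k)|_{y=b} · (x − a)^k / k!, the series converging absolutely. -/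
open Metric Filter Topology in
theorem lagrange_key (f h g : ℂ → ℂ) (a b : ℂ) (hf : AnalyticAt ℂ f b) (hh : AnalyticAt ℂ h b)
    (hg : AnalyticAt ℂ g a) (hfa : f b = a) (hgf : ∀ᶠ y in 𝓝 b, g (f y) = y)
    (hhf : ∀ᶠ y in 𝓝 b, h y * (f y - a) = y - b) (hb : h b ≠ 0) (k : ℕ) :
    iteratedDeriv (k + 1) g a = iteratedDeriv k (fun y => (h y) ^ (k + 1)) b := by
  have hG : AnalyticAt ℂ (fun z => deriv g (a + z)) 0 := by
    have : AnalyticAt ℂ (deriv g) (a + 0) := by simpa using hg.deriv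
    exact this.fun_comp (f := fun z => a + z) (by fun_prop)
  obtain ⟨F, hF, hGF⟩ := hG.exists_eq_sum_add_pow_mul (k + 1)
  have hck : iteratedDeriv k (fun z => deriv g (a + z)) 0 = iteratedDeriv (k + 1) g a := by
    rw [iteratedDeriv_comp_const_add, iteratedDeriv_succ']
    simp
  generalize hc : (fun i => iteratedDeriv i (fun z => deriv g (a + z)) 0) = c at *
  have hc' : ∀ i, iteratedDeriv i (fun z => deriv g (a + z)) 0 = c i := fun i => by rw [← hc]
  simp only [hc'] at hGF hck
  have hfc : Tendsto f (𝓝 b) (𝓝 a) := hfa ▸ hf.continuousAt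
  have hfc0 : Tendsto (fun y => f y - a) (𝓝 b) (𝓝 0) := by
    simpa using hfc.sub_const a
  have hev : ∀ᶠ y in 𝓝 b, AnalyticAt ℂ f y ∧ AnalyticAt ℂ h y ∧ h y ≠ 0 ∧
      AnalyticAt ℂ F (f y - a) ∧ deriv g (f y) * deriv f y = 1 ∧
      h y * (f y - a) = y - b ∧ deriv h y * (f y - a) + h y * deriv f y = 1 := by
    filter_upwards [hf.eventually_analyticAt, hh.eventually_analyticAt,
      hh.continuousAt.eventually_ne hb, hfc0.eventually hF.eventually_analyticAt,
      hfc.eventually hg.eventually_analyticAt, hgf.eventually_nhds, hhf.eventually_nhds]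
      with y h1 h2 h3 h4 h5 h6 h7
    refine ⟨h1, h2, h3, h4, ?_, h7.self_of_nhds, ?_⟩
    · have e1 : HasDerivAt (fun y => g (f y)) (deriv g (f y) * deriv f y) y :=
        h5.differentiableAt.hasDerivAt.comp y h1.differentiableAt.hasDerivAt
      have e2 : HasDerivAt (fun y => g (f y)) 1 y := (hasDerivAt_id y).congr_of_eventuallyEq h6
      exact e1.unique e2
    · have e1 : HasDerivAt (fun y => h y * (f y - a))
          (deriv h y * (f y - a) + h y * deriv f y) y :=
        h2.differentiableAt.hasDerivAt.mul (h1.differentiableAt.hasDerivAt.sub_const a)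
      have e2 : HasDerivAt (fun y => h y * (f y - a)) 1 y :=
        ((hasDerivAt_id y).sub_const b).congr_of_eventuallyEq h7
      exact e1.unique e2
  obtain ⟨ρ, hρ, hball⟩ := nhds_basis_closedBall.eventually_iff.1 hev
  have hI := DifferentiableOn.circleIntegral_one_div_sub_center_pow_smul (c := b)
    (f := fun y => h y ^ (k + 1)) hρ k
    (fun y hy => ((hball hy).2.1.pow (k+1)).differentiableAt.differentiableWithinAt)
  let E : ℂ → ℂ := fun y => F (f y - a) * deriv f y - c k / k.factorial * (deriv h y / h y)
  let P : ℂ → ℂ := fun y => ∑ i ∈ Finset.range k,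
    c i / i.factorial * ((f y - a) ^ ((i : ℤ) - k) / ((i : ℤ) - k : ℤ))
  let Pd : ℂ → ℂ := fun y => ∑ i ∈ Finset.range k,
    c i / i.factorial * ((f y - a) ^ ((i : ℤ) - k - 1) * deriv f y)
  have hne : ∀ y ∈ sphere b ρ, y - b ≠ 0 := fun y hy h0 => by
    rw [mem_sphere_iff_norm, h0, norm_zero] at hy
    exact hρ.ne hy
  have hne' : ∀ y ∈ sphere b ρ, f y - a ≠ 0 := fun y hy h0 => by
    have := (hball (sphere_subset_closedBall hy)).2.2.2.2.2.1
    rw [h0, mul_zero] at this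
    exact hne y hy this.symm
  have hE : ∀ y ∈ closedBall b ρ, AnalyticAt ℂ E y := fun y hy => by
    obtain ⟨h1, h2, h3, h4, -⟩ := hball hy
    have h5 : AnalyticAt ℂ (fun y => F (f y - a)) y :=
      h4.fun_comp (f := fun y => f y - a) (by fun_prop)
    exact (h5.mul h1.deriv).sub (analyticAt_const.mul (h2.deriv.div h2 h3))
  have hP : ∀ y ∈ sphere b ρ, HasDerivAt P (Pd y) y := fun y hy => by
    obtain ⟨h1, h2, h3, h4, -⟩ := hball (sphere_subset_closedBall hy)
    refine HasDerivAt.fun_sum fun i hi => HasDerivAt.const_mul _ ?_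
    have hik : ((((i : ℤ) - k : ℤ)) : ℂ) ≠ 0 := by
      have := Finset.mem_range.1 hi
      exact_mod_cast (by omega : (i : ℤ) - k ≠ 0)
    have := ((hasDerivAt_zpow ((i : ℤ) - k) (f y - a) (Or.inl (hne' y hy))).comp y
      (h1.differentiableAt.hasDerivAt.sub_const a)).div_const (((i : ℤ) - k : ℤ) : ℂ)
    rw [mul_assoc, mul_div_cancel_left₀ _ hik] at this
    exact this
  have hPdc : ContinuousOn Pd (sphere b ρ) := fun y hy => by
    obtain ⟨h1, h2, h3, h4, -⟩ := hball (sphere_subset_closedBall hy)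
    refine ContinuousAt.continuousWithinAt ?_
    refine tendsto_finsetSum _ fun i hi => ContinuousAt.mul continuousAt_const ?_
    exact ((h1.continuousAt.sub continuousAt_const).zpow₀ _ (Or.inl (hne' y hy))).mul
      h1.deriv.continuousAt
  have hdec : Set.EqOn (fun y => (1 / (y - b) ^ (k + 1)) • (h y ^ (k + 1)))
      (fun y => Pd y + (c k / k.factorial * (y - b)⁻¹ + E y)) (sphere b ρ) := fun y hy => by
    obtain ⟨h1, h2, h3, h4, h5, h6, h7⟩ := hball (sphere_subset_closedBall hy)
    have hu := hne' y hy
    have hGy := hGF (f y - a)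
    rw [add_sub_cancel, Finset.sum_range_succ] at hGy
    simp only [E, Pd]
    have s1 : ∑ i ∈ Finset.range k, c i / i.factorial * ((f y - a) ^ ((i : ℤ) - k - 1) * deriv f y)
        = (∑ i ∈ Finset.range k, ((f y - a) ^ i / i.factorial) • c i) * deriv f y
          / (f y - a) ^ (k + 1) := by
      rw [Finset.sum_mul, Finset.sum_div]
      refine Finset.sum_congr rfl fun i hi => ?_
      rw [sub_sub, zpow_sub₀ hu, zpow_natCast, ← Nat.cast_succ, zpow_natCast, smul_eq_mul,
        Nat.succ_eq_add_one]
      generalize f y - a = u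
      ring
    rw [s1]
    have s2 : (∑ i ∈ Finset.range k, ((f y - a) ^ i / i.factorial) • c i) * deriv f y =
        1 - ((f y - a) ^ k / k.factorial * c k + (f y - a) ^ (k + 1) * F (f y - a)) * deriv f y := by
      rw [← h5, hGy]; simp only [smul_eq_mul]; ring
    rw [s2, ← h6]
    have s3 : deriv f y = (1 - deriv h y * (f y - a)) / h y := by
      rw [eq_div_iff h3, ← h7]; ring
    rw [s3]
    generalize f y - a = u at *
    have hk : (k.factorial : ℂ) ≠ 0 := by exact_mod_cast k.factorial_ne_zero
    simp only [smul_eq_mul]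
    rw [mul_pow]
    field_simp
    ring
  have hEc : ContinuousOn E (sphere b ρ) := fun y hy =>
    (hE y (sphere_subset_closedBall hy)).continuousAt.continuousWithinAt
  have hEi : (∮ y in C(b, ρ), E y) = 0 :=
    Complex.circleIntegral_eq_zero_of_differentiable_on_off_countable hρ.le Set.countable_empty
      (fun y hy => (hE y hy).continuousAt.continuousWithinAt)
      (fun y hy => (hE y (ball_subset_closedBall hy.1)).differentiableAt)
  have hPi : (∮ y in C(b, ρ), Pd y) = 0 :=
    circleIntegral.integral_eq_zero_of_hasDerivWithinAt hρ.le
      fun y hy => (hP y hy).hasDerivWithinAt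
  have hic : CircleIntegrable (fun y => c k / k.factorial * (y - b)⁻¹) b ρ :=
    ContinuousOn.circleIntegrable hρ.le (continuousOn_const.mul
      ((continuousOn_id.sub continuousOn_const).inv₀ hne))
  rw [circleIntegral.integral_congr hρ.le hdec, circleIntegral.integral_add
    (hPdc.circleIntegrable hρ.le) (hic.fun_add (hEc.circleIntegrable hρ.le)),
    circleIntegral.integral_add hic (hEc.circleIntegrable hρ.le), hPi, hEi,
    circleIntegral.integral_const_mul, circleIntegral.integral_sub_center_inv _ hρ.ne'] at hI
  rw [← hck]
  have hk : (k.factorial : ℂ) ≠ 0 := by exact_mod_cast k.factorial_ne_zero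
  have h2 := Complex.two_pi_I_ne_zero
  have : (2 * Real.pi * Complex.I / k.factorial) * c k = (2 * Real.pi * Complex.I / k.factorial) *
      iteratedDeriv k (fun y => (h y) ^ (k + 1)) b := by
    rw [smul_eq_mul] at hI; rw [← hI]; ring
  exact mul_left_cancel₀ (div_ne_zero h2 hk) this

/-- **Lagrange Inversion Formula** (analytic version).
If `f` is analytic near `b` with `f b = a` and `f' b ≠ 0`, and `h` is the analytic
extension of `y ↦ (y - b)/(f y - a)` across `y = b` (with `h b = 1 / f' b`), then there is
a local analytic inverse `g` of `f` on a disc around `a`, given by the absolutely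
convergent series `g x = b + ∑_{k ≥ 1} (d/dy)^{k-1} (h y)^k |_{y=b} · (x-a)^k / k!`. -/
theorem lagrange_inversion_analytic
    (f h : ℂ → ℂ) (a b : ℂ) (s : Set ℂ) (hs : s ∈ nhds b)
    (hf : AnalyticOnNhd ℂ f s) (hh : AnalyticOnNhd ℂ h s)
    (hfa : f b = a) (hfb : deriv f b ≠ 0)
    (hhy : ∀ y ∈ s, y ≠ b → h y = (y - b) / (f y - a))
    (hhb : h b = 1 / deriv f b) :
    ∃ r > (0 : ℝ), ∃ g : ℂ → ℂ,
      AnalyticOnNhd ℂ g (Metric.ball a r) ∧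
      g a = b ∧
      (∀ x ∈ Metric.ball a r, f (g x) = x) ∧
      (∀ x ∈ Metric.ball a r,
        Summable (fun k : ℕ =>
          ‖iteratedDeriv k (fun y => (h y) ^ (k + 1)) b * (x - a) ^ (k + 1) /
            ((k + 1).factorial : ℂ)‖) ∧
        g x = b + ∑' k : ℕ,
          iteratedDeriv k (fun y => (h y) ^ (k + 1)) b * (x - a) ^ (k + 1) /
            ((k + 1).factorial : ℂ)) := by
  have hbs := mem_of_mem_nhds hs
  have hfb' := hf b hbs
  have hgan := hfb'.analyticAt_localInverse hfb
  have hgl := hfb'.hasStrictDerivAt.eventually_left_inverse hfb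
  have hgr := hfb'.hasStrictDerivAt.eventually_right_inverse hfb
  generalize hfb'.hasStrictDerivAt.localInverse f (deriv f b) b hfb = g at hgan hgl hgr
  rw [hfa] at hgan hgr
  have hga : g a = b := by rw [← hfa]; exact hgl.self_of_nhds
  have hb : h b ≠ 0 := by rw [hhb]; exact one_div_ne_zero hfb
  have hhf : ∀ᶠ y in nhds b, h y * (f y - a) = y - b := by
    filter_upwards [hs, (hh b hbs).continuousAt.eventually_ne hb] with y hy hy0
    by_cases hyb : y = b
    · simp [hyb, hfa]
    · have e := hhy y hy hyb
      have : f y - a ≠ 0 := fun h0 => hy0 (by rw [e, h0, div_zero])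
      rw [e, div_mul_cancel₀ _ this]
  obtain ⟨r, hr, hball⟩ := Metric.nhds_basis_ball.eventually_iff.1
    (hgan.eventually_analyticAt.and hgr)
  refine ⟨r, hr, g, fun x hx => (hball hx).1, hga, fun x hx => (hball hx).2, fun x hx => ?_⟩
  have hsum := Complex.hasSum_taylorSeries_on_ball (f := g) (c := a) (r := r) (z := x)
    (fun y hy => (hball hy).1.differentiableAt.differentiableWithinAt) hx
  rw [← hasSum_nat_add_iff' 1] at hsum
  have hterm : (fun k : ℕ => iteratedDeriv k (fun y => (h y) ^ (k + 1)) b * (x - a) ^ (k + 1) /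
            ((k + 1).factorial : ℂ)) = fun k : ℕ =>
      ((k + 1).factorial : ℂ)⁻¹ • (x - a) ^ (k + 1) • iteratedDeriv (k + 1) g a := by
    funext k
    rw [lagrange_key f h g a b hfb' (hh b hbs) hgan hfa hgl hhf hb k]
    simp only [smul_eq_mul]
    ring
  have hs2 : HasSum (fun k : ℕ => iteratedDeriv k (fun y => (h y) ^ (k + 1)) b *
      (x - a) ^ (k + 1) / ((k + 1).factorial : ℂ)) (g x - b) := by
    rw [hterm]
    simpa [hga] using hsum
  refine ⟨hs2.summable.norm, ?_⟩
  rw [hs2.tsum_eq]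
  ring
end

section
/- Let α be a finite type with decidable equality, let σ and τ be disjoint cyclic permutations of α, and let a be in the support of σ and b in the support of τ. Then the product (swap a b) · σ · τ (composition applying σ·τ first and then the transposition swapping a and b) is a single cycle whose support equals the union of the supports of σ and τ; in particular its support has cardinality |support σ| + |support τ|. -/
/-- On the support of `σ`, the product agrees with `swap a b * σ`. -/
theorem join_apply {α : Type*} [DecidableEq α]
    (σ τ : Equiv.Perm α) (hd : σ.Disjoint τ) (a b : α) (x : α) (hx : σ x ≠ x) :
    (Equiv.swap a b * σ * τ) x = Equiv.swap a b (σ x) := by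
  have h : τ x = x := (hd x).resolve_left hx
  simp [Equiv.Perm.mul_apply, h]

/-- The whole `σ`-orbit of `a` lies in one cycle of the product. -/
theorem join_sameCycle {α : Type*} [DecidableEq α]
    (σ τ : Equiv.Perm α) (hd : σ.Disjoint τ) (a b : α) (ha : σ a ≠ a) (hb : τ b ≠ b) (n : ℕ) :
    (Equiv.swap a b * σ * τ).SameCycle a ((σ ^ n) a) := by
  induction n with
  | zero => exact Equiv.Perm.SameCycle.refl _ _
  | succ n ih =>
    by_cases h : (σ ^ (n + 1)) a = a
    · rw [h]
    · have hx : σ ((σ ^ n) a) ≠ (σ ^ n) a := by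
        intro h'
        rw [← Equiv.Perm.mul_apply, ← pow_succ', pow_succ, Equiv.Perm.mul_apply] at h'
        exact ha ((σ ^ n).injective h')
      rw [pow_succ', Equiv.Perm.mul_apply] at h ⊢
      have hne : σ ((σ ^ n) a) ≠ b := by
        intro h'
        have h2 : σ b ≠ b := by
          rw [← h']
          exact fun h3 => hx (σ.injective h3)
        exact (hd b).elim h2 hb
      have h3 := join_apply σ τ hd a b _ hx
      rw [Equiv.swap_apply_of_ne_of_ne h hne] at h3
      rw [← h3]
      exact Equiv.Perm.sameCycle_apply_right.2 ih

/-- The **join** case of the cut-and-join analysis: multiplying by a transposition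
`(a b)` whose entries lie in two disjoint cycles `σ` and `τ` joins them into a single
cycle whose support is the union of the two supports, of cardinality
`|support σ| + |support τ|`. -/
theorem join_case {α : Type*} [Fintype α] [DecidableEq α]
    (σ τ : Equiv.Perm α) (hσ : σ.IsCycle) (hτ : τ.IsCycle) (hd : σ.Disjoint τ)
    (a b : α) (ha : a ∈ σ.support) (hb : b ∈ τ.support) :
    (Equiv.swap a b * σ * τ).IsCycle ∧
    (Equiv.swap a b * σ * τ).support = σ.support ∪ τ.support ∧
    (Equiv.swap a b * σ * τ).support.card = σ.support.card + τ.support.card := by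
  have ha' : σ a ≠ a := Equiv.Perm.mem_support.1 ha
  have hb' : τ b ≠ b := Equiv.Perm.mem_support.1 hb
  have hsymm : Equiv.swap b a * τ * σ = Equiv.swap a b * σ * τ := by
    rw [Equiv.swap_comm, mul_assoc, mul_assoc, hd.commute.eq]
  have hA : ∀ x, σ x ≠ x → (Equiv.swap a b * σ * τ).SameCycle a x := by
    intro x hx
    obtain ⟨n, rfl⟩ := hσ.exists_pow_eq ha' hx
    exact join_sameCycle σ τ hd a b ha' hb' n
  have hB : ∀ x, τ x ≠ x → (Equiv.swap a b * σ * τ).SameCycle b x := by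
    intro x hx
    obtain ⟨n, rfl⟩ := hτ.exists_pow_eq hb' hx
    have := join_sameCycle τ σ hd.symm b a hb' ha' n
    rwa [hsymm] at this
  have hlink : (Equiv.swap a b * σ * τ).SameCycle a b := by
    have hx : σ (σ.symm a) ≠ σ.symm a := by
      intro h
      have h2 := congrArg σ h
      simp only [Equiv.apply_symm_apply] at h2
      exact ha' h2
    have h1 := Equiv.Perm.sameCycle_apply_right.2 (hA _ hx)
    rw [join_apply σ τ hd a b _ hx] at h1
    simpa using h1
  have hab : a ≠ b := by
    rintro rfl
    exact (hd a).elim ha' hb'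
  have hall : ∀ x, x ∈ σ.support ∪ τ.support → (Equiv.swap a b * σ * τ).SameCycle a x := by
    intro x hx
    rcases Finset.mem_union.1 hx with h | h
    · exact hA x (Equiv.Perm.mem_support.1 h)
    · exact hlink.trans (hB x (Equiv.Perm.mem_support.1 h))
  have hane : (Equiv.swap a b * σ * τ) a ≠ a := fun h => hab (hlink.eq_of_left h)
  have hsupp : (Equiv.swap a b * σ * τ).support = σ.support ∪ τ.support := by
    ext x
    constructor
    · intro hx
      by_contra hn
      simp only [Finset.mem_union, Equiv.Perm.mem_support, not_or, not_not] at hn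
      have hxa : x ≠ a := by rintro rfl; exact ha' hn.1
      have hxb : x ≠ b := by rintro rfl; exact hb' hn.2
      apply Equiv.Perm.mem_support.1 hx
      simp [Equiv.Perm.mul_apply, hn.1, hn.2, Equiv.swap_apply_of_ne_of_ne hxa hxb]
    · intro hx
      rw [Equiv.Perm.mem_support]
      intro h
      have h2 := (hall x hx).eq_of_right h
      exact hane (h2 ▸ h)
  refine ⟨⟨a, hane, fun x hx => hall x ?_⟩, hsupp, ?_⟩
  · rw [← hsupp]
    exact Equiv.Perm.mem_support.2 hx
  · rw [hsupp, Finset.card_union_of_disjoint hd.disjoint_support]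
end

section
/- Let α be a finite type with decidable equality, let σ be a cyclic permutation of α with support of cardinality n, let a be in the support of σ, and let k be an integer with 1 ≤ k ≤ n − 1; set b = σ^k(a). Then for the permutation ρ = (swap a b) · σ (composition applying σ first and then the transposition swapping a and b): every point outside the support of σ is fixed by ρ, the ρ-orbit of a and the ρ-orbit of b are disjoint, they have cardinalities k and n − k respectively, and their union equals the support of σ. -/
theorem orbit_eq_image {α : Type*} [Fintype α] [DecidableEq α] (ρ : Equiv.Perm α) (p : ℕ → α)
    (s t : ℕ) (hst : s < t) (h1 : ∀ i, s ≤ i → i + 1 < t → ρ (p i) = p (i + 1))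
    (h2 : ρ (p (t - 1)) = p s) :
    {x | ρ.SameCycle (p s) x} = p '' Set.Ico s t := by
  ext x
  simp only [Set.mem_ofPred_eq, Set.mem_image, Set.mem_Ico]
  constructor
  · intro h
    obtain ⟨m, -, -, rfl⟩ := h.exists_pow_eq'
    clear h
    induction m with
    | zero => exact ⟨s, ⟨le_refl _, hst⟩, by simp⟩
    | succ m ih =>
      obtain ⟨i, ⟨hi1, hi2⟩, hi⟩ := ih
      rw [pow_succ', Equiv.Perm.mul_apply, ← hi]
      by_cases h : i + 1 < t
      · exact ⟨i + 1, ⟨by omega, h⟩, (h1 i hi1 h).symm⟩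
      · obtain rfl : i = t - 1 := by omega
        exact ⟨s, ⟨le_refl _, hst⟩, h2.symm⟩
  · rintro ⟨i, ⟨hi1, hi2⟩, rfl⟩
    induction i, hi1 using Nat.le_induction with
    | base => exact Equiv.Perm.SameCycle.refl _ _
    | succ i hi ih =>
      rw [← h1 i hi hi2, Equiv.Perm.sameCycle_apply_right]
      exact ih (by omega)

/-- The **cut** case of the cut-and-join analysis: if `σ` is a cycle with support of
cardinality `n`, `a ∈ support σ` and `b = σ^k a` with `1 ≤ k ≤ n - 1`, then for
`ρ = (a b) · σ`: every point outside `support σ` is fixed by `ρ`, the `ρ`-orbits of `a`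
and of `b` (in the sense of `SameCycle`) are disjoint, have cardinalities `k` and `n - k`
respectively, and their union is the support of `σ`. -/
theorem cut_case {α : Type*} [Fintype α] [DecidableEq α]
    (σ : Equiv.Perm α) (hσ : σ.IsCycle) (n : ℕ) (hn : σ.support.card = n)
    (a : α) (ha : a ∈ σ.support) (k : ℕ) (hk1 : 1 ≤ k) (hk2 : k ≤ n - 1)
    (b : α) (hb : b = (σ ^ k) a) :
    (∀ x, x ∉ σ.support → (Equiv.swap a b * σ) x = x) ∧
    Disjoint {x | (Equiv.swap a b * σ).SameCycle a x}
             {x | (Equiv.swap a b * σ).SameCycle b x} ∧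
    Set.ncard {x | (Equiv.swap a b * σ).SameCycle a x} = k ∧
    Set.ncard {x | (Equiv.swap a b * σ).SameCycle b x} = n - k ∧
    {x | (Equiv.swap a b * σ).SameCycle a x} ∪ {x | (Equiv.swap a b * σ).SameCycle b x}
      = ↑σ.support := by
  have hc : σ.IsCycleOn (σ.support : Set α) := by
    have h := hσ.isCycleOn
    have e : (σ.support : Set α) = {x | σ x ≠ x} := by ext x; simp
    rwa [e]
  have hn2 : 0 < n := by rw [← hn]; exact Finset.card_pos.2 ⟨a, ha⟩
  obtain ⟨p, hp⟩ : ∃ p : ℕ → α, ∀ i, p i = (σ ^ i) a := ⟨_, fun _ => rfl⟩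
  have hmod : ∀ i j, p i = p j ↔ i ≡ j [MOD n] := by
    intro i j
    rw [hp, hp, hc.pow_apply_eq_pow_apply ha, hn]
  have hinj : ∀ i j, i < n → j < n → p i = p j → i = j := by
    intro i j hi hj h
    exact Nat.ModEq.eq_of_lt_of_lt ((hmod i j).1 h) hi hj
  have h0 : p 0 = a := by simp [hp]
  have hk : p k = b := by rw [hp, hb]
  have hpn : p n = a := by
    rw [← h0, hmod]
    simp [Nat.ModEq]
  have hs : ∀ i, σ (p i) = p (i + 1) := by
    intro i
    rw [hp, hp, pow_succ', Equiv.Perm.mul_apply]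
  have hsupp : (↑σ.support : Set α) = p '' Set.Ico 0 n := by
    ext x
    constructor
    · intro hx
      obtain ⟨m, hm, h⟩ := hc.exists_pow_eq ha hx
      exact ⟨m, ⟨by omega, by omega⟩, by rw [hp, h]⟩
    · rintro ⟨i, -, rfl⟩
      rw [hp]
      simpa using ha
  have hstep : ∀ i, i + 1 < n → i + 1 ≠ k → (Equiv.swap a b * σ) (p i) = p (i + 1) := by
    intro i hi hik
    rw [Equiv.Perm.mul_apply, hs]
    apply Equiv.swap_apply_of_ne_of_ne
    · intro h
      have := hinj _ _ hi hn2 (h.trans h0.symm)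
      omega
    · intro h
      exact hik (hinj _ _ hi (by omega) (h.trans hk.symm))
  have hA := orbit_eq_image (Equiv.swap a b * σ) p 0 k (by omega)
    (fun i _ hi => hstep i (by omega) (by omega))
    (by rw [Equiv.Perm.mul_apply, hs, Nat.sub_add_cancel hk1, hk, Equiv.swap_apply_right, h0])
  have hB := orbit_eq_image (Equiv.swap a b * σ) p k n (by omega)
    (fun i _ hi => hstep i (by omega) (by omega))
    (by rw [Equiv.Perm.mul_apply, hs, Nat.sub_add_cancel hn2, hpn, Equiv.swap_apply_left, hk])
  rw [h0] at hA
  rw [hk] at hB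
  rw [hA, hB, hsupp]
  have hcard : ∀ s t, t ≤ n → Set.ncard (p '' Set.Ico s t) = t - s := by
    intro s t ht
    rw [Set.ncard_image_of_injOn]
    · rw [← Finset.coe_Ico, Set.ncard_coe_finset, Nat.card_Ico]
    · intro i hi j hj h
      exact hinj i j (lt_of_lt_of_le hi.2 ht) (lt_of_lt_of_le hj.2 ht) h
  refine ⟨?_, ?_, ?_, hcard k n le_rfl, ?_⟩
  · intro x hx
    have hbs : b ∈ σ.support := by rw [hb]; simpa using ha
    rw [Equiv.Perm.mul_apply, Equiv.Perm.notMem_support.1 hx]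
    apply Equiv.swap_apply_of_ne_of_ne
    · rintro rfl; exact hx ha
    · intro h; exact hx (h ▸ hbs)
  · rw [Set.disjoint_left]
    rintro _ ⟨i, hi, rfl⟩ ⟨j, hj, h⟩
    have h1 := hi.2
    have h2 := hj.1
    have := hinj j i hj.2 (by omega) h
    omega
  · rw [hcard 0 k (by omega), Nat.sub_zero]
  · rw [← Set.image_union, Set.Ico_union_Ico_eq_Ico (by omega) (by omega)]
end

section
/- Define polynomials ξ̂_n ∈ ℚ[t] recursively by ξ̂_0 = t − 1 and ξ̂_n = t²(t−1)·(d/dt)ξ̂_{n−1} for n ≥ 1. Then for every n ≥ 0, ξ̂_n is a polynomial of degree 2n+1 with leading coefficient (2n−1)!! = (2n)!/(2^n n!). Moreover, for every n ≥ 1: the coefficient of t^{2n} in ξ̂_n equals −(2n+1)!!/3; the coefficient of t^{n+1} equals (−1)^n n!; the coefficient of t^k vanishes for all k ≤ n; and the coefficients a_n := coefficient of t^{n+2} in ξ̂_n satisfy a_0 = 0 and a_n = −((n+1)·a_{n−1} + (−1)^n n!) for n ≥ 1. -/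
open Polynomial

/-- The polynomials `ξ̂_n(t)` from Hurwitz theory, defined by `ξ̂_0 = t - 1` and the
differential recursion `ξ̂_n = t²(t-1) (d/dt) ξ̂_{n-1}`. -/
noncomputable def xihat : ℕ → Polynomial ℚ
  | 0 => Polynomial.X - 1
  | n + 1 => Polynomial.X ^ 2 * (Polynomial.X - 1) * Polynomial.derivative (xihat n)

theorem xihat_coeff_succ (n k : ℕ) : (xihat (n + 1)).coeff (k + 2)
    = (k : ℚ) * (xihat n).coeff k - ((k : ℚ) + 1) * (xihat n).coeff (k + 1) := by
  have h : xihat (n + 1) = (X * derivative (xihat n) - derivative (xihat n)) * X ^ 2 := by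
    rw [xihat]; ring
  rw [h, coeff_mul_X_pow, coeff_sub, coeff_derivative]
  cases k with
  | zero => simp
  | succ k => rw [coeff_X_mul, coeff_derivative]; push_cast; ring

theorem xihat_coeff_succ_low (n k : ℕ) (hk : k < 2) : (xihat (n + 1)).coeff k = 0 := by
  have h : xihat (n + 1) = (X * derivative (xihat n) - derivative (xihat n)) * X ^ 2 := by
    rw [xihat]; ring
  rw [h, coeff_mul_X_pow']
  simp [hk]

theorem xihat_zero_coeff (k : ℕ) : (xihat 0).coeff (k + 1) = if k = 0 then 1 else 0 := by
  rw [xihat, coeff_sub, coeff_X, coeff_one]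
  by_cases h : k = 0 <;> simp [h, eq_comm]

theorem xihat_high (n : ℕ) : ∀ k, 2 * n + 1 < k → (xihat n).coeff k = 0 := by
  induction n with
  | zero =>
    intro k hk
    obtain ⟨j, rfl⟩ : ∃ j, k = j + 1 := ⟨k - 1, by omega⟩
    rw [xihat_zero_coeff, if_neg (by omega)]
  | succ n ih =>
    intro k hk
    obtain ⟨j, rfl⟩ : ∃ j, k = j + 2 := ⟨k - 2, by omega⟩
    rw [xihat_coeff_succ, ih j (by omega), ih (j + 1) (by omega)]; ring

theorem xihat_top (n : ℕ) : (xihat n).coeff (2 * n + 1)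
    = ((2 * n).factorial : ℚ) / (2 ^ n * n.factorial) := by
  induction n with
  | zero => simp [xihat_zero_coeff 0]
  | succ n ih =>
    rw [show 2 * (n + 1) + 1 = (2 * n + 1) + 2 by ring, xihat_coeff_succ, ih,
      xihat_high n (2 * n + 1 + 1) (by omega), show 2 * (n + 1) = 2 * n + 1 + 1 by ring]
    have := Nat.factorial_ne_zero n
    simp only [Nat.factorial_succ]
    push_cast
    field_simp
    ring

theorem xihat_second (n : ℕ) : (xihat (n + 1)).coeff (2 * (n + 1))
    = -(((2 * (n + 1) + 2).factorial : ℚ) / (2 ^ (n + 1 + 1) * (n + 1 + 1).factorial)) / 3 := by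
  induction n with
  | zero =>
    have := xihat_coeff_succ 0 0
    have h1 := xihat_zero_coeff 0
    norm_num [Nat.factorial] at this h1 ⊢
    rw [this, h1]
  | succ n ih =>
    rw [show 2 * (n + 1 + 1) = 2 * (n + 1) + 2 by ring, xihat_coeff_succ, ih, xihat_top,
      show 2 * (n + 1) = 2 * n + 1 + 1 by ring]
    have := Nat.factorial_ne_zero n
    simp only [Nat.factorial_succ]
    push_cast
    field_simp
    ring

theorem xihat_low (n : ℕ) : ∀ k ≤ n + 1, (xihat (n + 1)).coeff k = 0 := by
  induction n with
  | zero => intro k hk; exact xihat_coeff_succ_low _ _ (by omega)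
  | succ n ih =>
    intro k hk
    by_cases h : k < 2
    · exact xihat_coeff_succ_low _ _ h
    obtain ⟨j, rfl⟩ : ∃ j, k = j + 2 := ⟨k - 2, by omega⟩
    rw [xihat_coeff_succ, ih j (by omega), ih (j + 1) (by omega)]; ring

theorem xihat_bottom (n : ℕ) : (xihat n).coeff (n + 1) = (-1) ^ n * n.factorial := by
  induction n with
  | zero => simp [xihat_zero_coeff 0]
  | succ n ih =>
    have h : (n : ℚ) * (xihat n).coeff n = 0 := by
      cases n with
      | zero => simp
      | succ n => rw [xihat_low n _ le_rfl, mul_zero]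
    rw [xihat_coeff_succ, ih, h, Nat.factorial_succ]
    push_cast
    ring

/-- Polynomiality and coefficient structure of `ξ̂_n`: it has degree `2n+1` with leading
coefficient `(2n-1)!! = (2n)!/(2ⁿ n!)`; for `n ≥ 1` the coefficient of `t^{2n}` is
`-(2n+1)!!/3` (where `(2n+1)!! = (2n+2)!/(2^{n+1}(n+1)!)`), the coefficient of `t^{n+1}`
is `(-1)ⁿ n!`, coefficients of `t^k` vanish for `k ≤ n`, and the coefficients
`a_n = [t^{n+2}] ξ̂_n` satisfy `a_0 = 0` and `a_n = -((n+1) a_{n-1} + (-1)ⁿ n!)`. -/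
theorem xihat_properties :
    (∀ n : ℕ, (xihat n).degree = (2 * n + 1 : ℕ) ∧
      (xihat n).leadingCoeff = ((2 * n).factorial : ℚ) / (2 ^ n * n.factorial)) ∧
    (∀ n : ℕ, 1 ≤ n →
      (xihat n).coeff (2 * n)
        = -(((2 * n + 2).factorial : ℚ) / (2 ^ (n + 1) * (n + 1).factorial)) / 3 ∧
      (xihat n).coeff (n + 1) = (-1) ^ n * n.factorial ∧
      (∀ k ≤ n, (xihat n).coeff k = 0)) ∧
    ((xihat 0).coeff 2 = 0 ∧
      ∀ n : ℕ, 1 ≤ n → (xihat n).coeff (n + 2)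
        = -(((n : ℚ) + 1) * (xihat (n - 1)).coeff ((n - 1) + 2) + (-1) ^ n * n.factorial)) := by
  refine ⟨fun n => ?_, fun n hn => ?_, xihat_zero_coeff 1, fun n hn => ?_⟩
  · have hne : (xihat n).coeff (2 * n + 1) ≠ 0 := by
      rw [xihat_top]
      have := Nat.factorial_ne_zero n
      have := Nat.factorial_ne_zero (2 * n)
      positivity
    have hd : (xihat n).degree = (2 * n + 1 : ℕ) := by
      apply le_antisymm
      · rw [degree_le_iff_coeff_zero]
        intro m hm
        exact xihat_high n m (by exact_mod_cast hm)
      · exact le_degree_of_ne_zero hne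
    refine ⟨hd, ?_⟩
    rw [leadingCoeff, natDegree_eq_of_degree_eq_some hd, xihat_top]
  · obtain ⟨m, rfl⟩ : ∃ m, n = m + 1 := ⟨n - 1, by omega⟩
    exact ⟨xihat_second m, xihat_bottom _, xihat_low m⟩
  · obtain ⟨m, rfl⟩ : ∃ m, n = m + 1 := ⟨n - 1, by omega⟩
    rw [show m + 1 + 2 = (m + 1) + 2 by ring, xihat_coeff_succ, xihat_bottom,
      Nat.add_sub_cancel, Nat.factorial_succ]
    push_cast
    ring
end

section
/- For every integer n ≥ 2, the identity (1/2) ∑_{a=1}^{n−1} (a^{a−1}/a!)·((n−a)^{n−a−1}/(n−a)!) = (n−1)·n^{n−2}/n! holds in ℚ. -/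
open Finset in
lemma diff_aux (m : ℕ) :
    ∑ i ∈ range (m + 1), ((m + 1).choose (i + 1) : ℚ) * ((-1) ^ (m - i) * ((i : ℚ) + 1) ^ m)
      = if m = 0 then 1 else 0 := by
  rcases Nat.eq_zero_or_pos m with rfl | hm
  · simp
  · have h := fwdDiff_iter_eq_sum_shift (1 : ℚ) (fun x : ℚ => x ^ m) (m + 1) 0
    rw [fwdDiff_iter_pow_eq_zero_of_lt (Nat.lt_succ_self m), sum_range_succ'] at h
    rw [if_neg hm.ne']
    simp [hm.ne'] at h
    rw [h]
    refine sum_congr rfl fun i _ => ?_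
    ring

open Finset in
lemma abel_aux (t : ℕ) (x : ℚ) :
    ∑ i ∈ range (t + 1), ((t + 1).choose (i + 1) : ℚ) * (((i : ℚ) + 1) ^ i *
      (x - (i + 1)) ^ (t - i)) = (t + 1) * x ^ t := by
  have h1 : ∀ i ∈ range (t + 1), ((t + 1).choose (i + 1) : ℚ) * (((i : ℚ) + 1) ^ i *
      (x - (i + 1)) ^ (t - i)) = ∑ j ∈ range (t - i + 1),
        ((t + 1).choose j : ℚ) * x ^ j *
        (((t - j + 1).choose (i + 1) : ℚ) * ((-1) ^ (t - j - i) * ((i : ℚ) + 1) ^ (t - j))) := by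
    intro i hi
    rw [sub_eq_add_neg, add_pow x, mul_sum, mul_sum]
    refine sum_congr rfl fun j hj => ?_
    simp only [mem_range] at hi hj
    have hc : (t + 1).choose (i + 1) * (t - i).choose j
        = (t + 1).choose j * (t - j + 1).choose (i + 1) := by
      have := Nat.choose_mul (n := t + 1) (k := j + (i + 1)) (s := j) (by omega)
      have h' := Nat.choose_mul (n := t + 1) (k := j + (i + 1)) (s := i + 1) (by omega)
      rw [Nat.choose_symm_add] at this
      rw [show t + 1 - j = t - j + 1 by omega, show j + (i + 1) - j = i + 1 by omega] at this
      rw [show t + 1 - (i + 1) = t - i by omega, show j + (i + 1) - (i + 1) = j by omega] at h'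
      rw [← this, ← h']
    have hc' : ((t + 1).choose (i + 1) : ℚ) * (t - i).choose j
        = (t + 1).choose j * (t - j + 1).choose (i + 1) := by exact_mod_cast hc
    obtain ⟨k, rfl⟩ : ∃ k, t = i + j + k := ⟨t - i - j, by omega⟩
    rw [show i + j + k - i - j = k by omega, show i + j + k - j - i = k by omega]
    rw [neg_pow, show i + j + k - j = i + k by omega] at *
    rw [pow_add]
    linear_combination (((i : ℚ) + 1) ^ i * x ^ j * (-1) ^ k * ((i : ℚ) + 1) ^ k) * hc'
  rw [sum_congr rfl h1, sum_comm' (t' := range (t + 1)) (s' := fun j => range (t - j + 1))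
    (by intro a b; simp only [mem_range]; omega)]
  simp_rw [← mul_sum, diff_aux]
  rw [sum_range_succ, sum_eq_zero]
  · simp [Nat.choose_succ_self_right]
  · intro j hj
    simp only [mem_range] at hj
    rw [if_neg (by omega), mul_zero]

/-- The tree-counting identity behind the Lambert curve: joining two rooted trees at
their roots gives a based tree, whence
`(1/2) ∑_{a=1}^{n-1} (a^{a-1}/a!)·((n-a)^{n-a-1}/(n-a)!) = (n-1)·n^{n-2}/n!`. -/
theorem rooted_tree_join_identity (n : ℕ) (hn : 2 ≤ n) :
    (1 / 2 : ℚ) * ∑ a ∈ Finset.Ico 1 n,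
        ((a : ℚ) ^ (a - 1) / a.factorial) *
        (((n - a : ℕ) : ℚ) ^ (n - a - 1) / ((n - a).factorial : ℚ))
      = ((n : ℚ) - 1) * (n : ℚ) ^ (n - 2) / (n.factorial : ℚ) := by
  obtain ⟨t, rfl⟩ : ∃ t, n = t + 1 := ⟨n - 1, by omega⟩
  have hn0 : ((t : ℚ) + 1) ≠ 0 := by positivity
  have hf : ((t + 1).factorial : ℚ) ≠ 0 := by positivity
  set f : ℕ → ℚ := fun a => (a : ℚ) ^ (a - 1) / a.factorial with hfdef
  have hA := abel_aux t (t + 1)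
  rw [Finset.sum_range_succ] at hA
  -- one-sided sum
  have hS : ∑ a ∈ Finset.Ico 1 (t + 1), f a * (((t + 1 - a : ℕ) : ℚ) * f (t + 1 - a))
      = (((t : ℚ) + 1) * (t + 1) ^ t - (t + 1) ^ t) / (t + 1).factorial := by
    rw [eq_div_iff hf, Finset.sum_Ico_eq_sum_range, Finset.sum_mul, Nat.add_sub_cancel, ← hA]
    simp only [Nat.choose_self, Nat.sub_self, pow_zero, Nat.cast_one, one_mul, mul_one,
      add_sub_cancel_right]
    refine Finset.sum_congr rfl fun i hi => ?_
    simp only [Finset.mem_range] at hi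
    obtain ⟨k, rfl⟩ : ∃ k, t = i + k + 1 := ⟨t - i - 1, by omega⟩
    rw [Nat.cast_choose ℚ (show i + 1 ≤ i + k + 1 + 1 by omega)]
    simp only [hfdef]
    rw [show i + k + 1 + 1 - (1 + i) = k + 1 by omega, show i + k + 1 + 1 - (i + 1) = k + 1 by omega,
      show i + k + 1 - i = k + 1 by omega, show 1 + i = i + 1 by omega]
    simp only [Nat.add_sub_cancel]
    have h1 : ((i + 1).factorial : ℚ) ≠ 0 := by positivity
    have h2 : ((k + 1).factorial : ℚ) ≠ 0 := by positivity
    push_cast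
    rw [show ((i : ℚ) + k + 1 + 1 - (i + 1)) = k + 1 by ring]
    field_simp
    ring
  have hS' : ∑ a ∈ Finset.Ico 1 (t + 1), ((a : ℚ) * f a) * f (t + 1 - a)
      = (((t : ℚ) + 1) * (t + 1) ^ t - (t + 1) ^ t) / (t + 1).factorial := by
    have hr := Finset.sum_Ico_reflect
      (fun a => f a * (((t + 1 - a : ℕ) : ℚ) * f (t + 1 - a))) 1 (show t + 1 ≤ t + 1 + 1 by omega)
    rw [Nat.add_sub_cancel_left, Nat.add_sub_cancel] at hr
    rw [← hS, ← hr]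
    refine Finset.sum_congr rfl fun i hi => ?_
    simp only [Finset.mem_Ico] at hi
    rw [show t + 1 - (t + 1 - i) = i by omega]
    ring
  have hsum : ((t : ℚ) + 1) * ∑ a ∈ Finset.Ico 1 (t + 1), f a * f (t + 1 - a)
      = 2 * ((((t : ℚ) + 1) * (t + 1) ^ t - (t + 1) ^ t) / (t + 1).factorial) := by
    rw [two_mul]
    nth_rewrite 1 [← hS]
    rw [← hS', ← Finset.sum_add_distrib, Finset.mul_sum]
    refine Finset.sum_congr rfl fun i hi => ?_
    simp only [Finset.mem_Ico] at hi
    rw [Nat.cast_sub (by omega)]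
    push_cast
    ring
  change (1 / 2 : ℚ) * ∑ a ∈ Finset.Ico 1 (t + 1), f a * f (t + 1 - a) = _
  apply mul_left_cancel₀ hn0
  rw [mul_left_comm, hsum]
  obtain ⟨s, rfl⟩ : ∃ s, t = s + 1 := ⟨t - 1, by omega⟩
  rw [show s + 1 + 1 - 2 = s by omega]
  push_cast
  field_simp
  ring
end

section
/- Define A_n = ∑_{ℓ=0}^n (binom(n,ℓ))² (binom(n+ℓ,ℓ))² for n ≥ 0. Then A_0 = 1, A_1 = 5, and for every integer n ≥ 1, (n+1)³·A_{n+1} + n³·A_{n−1} = (34n³ + 51n² + 27n + 5)·A_n. -/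
/-- The Apéry sequence `A_n = ∑_{ℓ=0}^n binom(n,ℓ)² binom(n+ℓ,ℓ)²`. -/
def aperyA (n : ℕ) : ℕ :=
  ∑ ℓ ∈ Finset.range (n + 1), (n.choose ℓ) ^ 2 * ((n + ℓ).choose ℓ) ^ 2

/-- The rational-valued product `binom(n,k) binom(n+k,k)`. -/
def apT (n k : ℕ) : ℚ := (n.choose k : ℚ) * ((n + k).choose k : ℚ)

theorem apT_zero (n : ℕ) : apT n 0 = 1 := by simp [apT]

theorem apT_of_lt {n k : ℕ} (h : n < k) : apT n k = 0 := by
  simp [apT, Nat.choose_eq_zero_of_lt h]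

theorem choose_right (n k : ℕ) :
    (n.choose (k + 1) : ℚ) * (k + 1) = n.choose k * ((n : ℚ) - k) := by
  rcases le_or_gt k n with h | h
  · have := Nat.choose_succ_right_eq n k
    rw [← Nat.cast_sub h]
    exact_mod_cast this
  · simp [Nat.choose_eq_zero_of_lt h, Nat.choose_eq_zero_of_lt (Nat.lt_succ_of_lt h)]

theorem choose_both (n k : ℕ) :
    ((n + 1).choose (k + 1) : ℚ) * (k + 1) = (n + 1) * n.choose k := by
  exact_mod_cast (Nat.add_one_mul_choose_eq n k).symm

theorem choose_up (n k : ℕ) :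
    ((n + 1).choose k : ℚ) * ((n : ℚ) + 1 - k) = n.choose k * (n + 1) := by
  have h1 := choose_right (n + 1) k
  have h2 := choose_both n k
  push_cast at h1
  linarith

theorem apT_right (n k : ℕ) :
    ((k : ℚ) + 1) ^ 2 * apT n (k + 1) = (n + k + 1) * ((n : ℚ) - k) * apT n k := by
  have h1 := choose_right n k
  have h2 := choose_both (n + k) k
  push_cast at h2
  unfold apT
  rw [← add_assoc]
  calc _ = ((n.choose (k + 1) : ℚ) * (k + 1)) * (((n + k + 1).choose (k + 1) : ℚ) * (k + 1)) := by
        ring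
    _ = _ := by rw [h1, h2]; ring

theorem apT_up (n k : ℕ) :
    ((n : ℚ) + 1 - k) * apT (n + 1) k = (n + 1 + k) * apT n k := by
  have h1 := choose_up n k
  have h2 := choose_up (n + k) k
  push_cast at h2
  have hn : (n : ℚ) + 1 ≠ 0 := by positivity
  unfold apT
  rw [show n + 1 + k = n + k + 1 by ring]
  apply mul_left_cancel₀ hn
  calc _ = (((n + 1).choose k : ℚ) * ((n : ℚ) + 1 - k)) *
        (((n + k + 1).choose k : ℚ) * ((n : ℚ) + k + 1 - k)) := by ring
    _ = _ := by rw [h1, h2]; ring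

theorem apT_both (n k : ℕ) :
    ((k : ℚ) + 1) ^ 2 * apT (n + 1) (k + 1) = (n + k + 1) * (n + k + 2) * apT n k := by
  have h1 := choose_both n k
  have h2 := choose_both (n + k + 1) k
  have h3 := choose_up (n + k) k
  push_cast at h2 h3
  unfold apT
  rw [show n + 1 + (k + 1) = n + k + 1 + 1 by ring]
  calc _ = (((n + 1).choose (k + 1) : ℚ) * (k + 1)) *
        (((n + k + 1 + 1).choose (k + 1) : ℚ) * (k + 1)) := by ring
    _ = (n.choose k : ℚ) * (n + k + 2) *
        (((n + k + 1).choose k : ℚ) * ((n : ℚ) + k + 1 - k)) := by rw [h1, h2]; ring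
    _ = _ := by rw [h3]; ring

/-- Zeilberger's certificate, with `n = m + 1`. -/
def apB (m k : ℕ) : ℚ :=
  4 * (2 * m + 3) * (k * (2 * k + 1) - (2 * m + 3) ^ 2) * apT (m + 1) k ^ 2

/-- The summand of the recursion, with `n = m + 1`. -/
def apS (m k : ℕ) : ℚ :=
  ((m : ℚ) + 2) ^ 3 * apT (m + 2) k ^ 2
    - (34 * ((m : ℚ) + 1) ^ 3 + 51 * ((m : ℚ) + 1) ^ 2 + 27 * ((m : ℚ) + 1) + 5)
      * apT (m + 1) k ^ 2
    + ((m : ℚ) + 1) ^ 3 * apT m k ^ 2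

theorem apS_succ (m j : ℕ) : apS m (j + 1) = apB m (j + 1) - apB m j := by
  have hj : ((j : ℚ) + 1) ^ 2 ≠ 0 := by positivity
  obtain ⟨f, hf⟩ : ∃ f : ℚ, apT (m + 1) j = ((j : ℚ) + 1) ^ 2 * f :=
    ⟨apT (m + 1) j / ((j : ℚ) + 1) ^ 2, by field_simp⟩
  have e1 : apT (m + 2) (j + 1) = (m + j + 2) * (m + j + 3) * f := by
    apply mul_left_cancel₀ hj
    rw [apT_both (m + 1) j, hf]; push_cast; ring
  have e2 : apT (m + 1) (j + 1) = (m + j + 2) * ((m : ℚ) + 1 - j) * f := by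
    apply mul_left_cancel₀ hj
    rw [apT_right (m + 1) j, hf]; push_cast; ring
  have e3 : apT m (j + 1) = ((m : ℚ) + 1 - j) * ((m : ℚ) - j) * f := by
    apply mul_left_cancel₀ hj
    have h := apT_up m j
    rw [hf] at h
    rw [apT_right m j]
    linear_combination (-((m : ℚ) - j)) * h
  unfold apS apB
  rw [e1, e2, e3, hf]
  push_cast
  ring

theorem apS_sum (m K : ℕ) : ∑ k ∈ Finset.range (K + 1), apS m k = apB m K := by
  induction K with
  | zero => simp [apS, apB, apT_zero]; ring
  | succ K ih => rw [Finset.sum_range_succ, ih, apS_succ]; ring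

theorem aperyA_cast (n N : ℕ) (h : n ≤ N) :
    (aperyA n : ℚ) = ∑ k ∈ Finset.range (N + 1), apT n k ^ 2 := by
  unfold aperyA
  push_cast
  rw [← Finset.sum_subset (Finset.range_mono (Nat.succ_le_succ h))]
  · exact Finset.sum_congr rfl fun k _ => by simp [apT, mul_pow]
  · intro k _ hk
    rw [apT_of_lt (by simpa using hk)]
    simp

/-- Apéry's recursion for the sequence `A_n`: `A_0 = 1`, `A_1 = 5`, and
`(n+1)³ A_{n+1} - (34n³+51n²+27n+5) A_n + n³ A_{n-1} = 0` for `n ≥ 1`. -/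
theorem aperyA_recursion :
    aperyA 0 = 1 ∧ aperyA 1 = 5 ∧
    ∀ n : ℕ, 1 ≤ n →
      (n + 1) ^ 3 * aperyA (n + 1) + n ^ 3 * aperyA (n - 1)
        = (34 * n ^ 3 + 51 * n ^ 2 + 27 * n + 5) * aperyA n := by
  refine ⟨by decide, by decide, ?_⟩
  intro n hn
  obtain ⟨m, rfl⟩ : ∃ m, n = m + 1 := ⟨n - 1, by omega⟩
  have h := apS_sum m (m + 2)
  have hB : apB m (m + 2) = 0 := by
    unfold apB
    rw [apT_of_lt (by omega)]
    simp
  rw [hB] at h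
  unfold apS at h
  rw [Finset.sum_add_distrib, Finset.sum_sub_distrib, ← Finset.mul_sum, ← Finset.mul_sum,
    ← Finset.mul_sum, ← aperyA_cast (m + 2) (m + 2) (by omega),
    ← aperyA_cast (m + 1) (m + 2) (by omega), ← aperyA_cast m (m + 2) (by omega)] at h
  have key : (((m + 1 + 1) ^ 3 * aperyA (m + 1 + 1) + (m + 1) ^ 3 * aperyA (m + 1 - 1) : ℕ) : ℚ)
      = (((34 * (m + 1) ^ 3 + 51 * (m + 1) ^ 2 + 27 * (m + 1) + 5) * aperyA (m + 1) : ℕ) : ℚ) := by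
    rw [Nat.add_sub_cancel]
    push_cast
    linear_combination h
  exact_mod_cast key
end

section
/- The value ζ(3) = ∑_{m=1}^∞ 1/m³ admits the integral representation ζ(3) = (1/2) ∫_0^1 ∫_0^1 ∫_0^1 dx dy dz / (1 − z + xyz), where the triple integral over the open unit cube converges. -/
open MeasureTheory

lemma lint_aux (F f : ℝ → ℝ) (hF : ContinuousOn F (Set.Icc 0 1))
    (hd : ∀ x ∈ Set.Ioo (0:ℝ) 1, HasDerivAt F (f x) x)
    (hf : ∀ x ∈ Set.Ioo (0:ℝ) 1, 0 ≤ f x) :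
    ∫⁻ x in Set.Ioo (0:ℝ) 1, ENNReal.ofReal (f x) = ENNReal.ofReal (F 1 - F 0) := by
  have hi : IntegrableOn f (Set.Ioc 0 1) :=
    intervalIntegral.integrableOn_deriv_of_nonneg hF hd hf
  have h2 : ∫ x in (0:ℝ)..1, f x = F 1 - F 0 :=
    intervalIntegral.integral_eq_sub_of_hasDerivAt_of_le zero_le_one hF hd
      ((intervalIntegrable_iff_integrableOn_Ioc_of_le zero_le_one).2 hi)
  rw [intervalIntegral.integral_of_le zero_le_one, integral_Ioc_eq_integral_Ioo] at h2
  rw [← h2, ofReal_integral_eq_lintegral_ofReal (hi.mono_set Set.Ioo_subset_Ioc_self)]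
  exact (ae_restrict_iff' measurableSet_Ioo).2 (Filter.Eventually.of_forall hf)

lemma lint_pow (n : ℕ) :
    ∫⁻ x in Set.Ioo (0:ℝ) 1, ENNReal.ofReal (x ^ n) = ENNReal.ofReal (1 / ((n:ℝ) + 1)) := by
  have hn : ((n:ℝ) + 1) ≠ 0 := by positivity
  rw [lint_aux (fun x => x ^ (n + 1) / ((n:ℝ) + 1)) (fun x => x ^ n) (by fun_prop)]
  · simp
  · intro x hx
    have := (hasDerivAt_pow (n + 1) x).div_const ((n:ℝ) + 1)
    refine this.congr_deriv ?_
    rw [Nat.add_sub_cancel]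
    push_cast
    field_simp
  · intro x hx
    exact pow_nonneg hx.1.le n

lemma lint_log (n : ℕ) :
    ∫⁻ x in Set.Ioo (0:ℝ) 1, ENNReal.ofReal (-Real.log x * x ^ n)
      = ENNReal.ofReal (1 / ((n:ℝ) + 1) ^ 2) := by
  have hn : ((n:ℝ) + 1) ≠ 0 := by positivity
  rw [lint_aux (fun x => x ^ (n + 1) / ((n:ℝ) + 1) ^ 2 - x ^ n * (x * Real.log x) / ((n:ℝ) + 1))
    (fun x => -Real.log x * x ^ n)]
  · simp
  · have := Real.continuous_mul_log
    fun_prop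
  · intro x hx
    have hx0 : x ≠ 0 := hx.1.ne'
    have h1 := (hasDerivAt_pow (n + 1) x).div_const (((n:ℝ) + 1) ^ 2)
    have h2 := ((hasDerivAt_pow (n + 1) x).mul (Real.hasDerivAt_log hx0)).div_const ((n:ℝ) + 1)
    have h3 := h1.sub h2
    refine (h3.congr_deriv ?_).congr_of_eventuallyEq (Filter.Eventually.of_forall fun y => ?_)
    · push_cast
      field_simp
      ring
    · simp only [Pi.sub_apply, Pi.mul_apply]
      ring
  · intro x hx
    exact mul_nonneg (neg_nonneg.2 (Real.log_nonpos hx.1.le hx.2.le)) (pow_nonneg hx.1.le n)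

lemma lint_z (a : ℝ) (h0 : 0 < a) (h1 : a < 1) :
    ∫⁻ z in Set.Ioo (0:ℝ) 1, ENNReal.ofReal (1 / (1 - z + a * z))
      = ∑' n : ℕ, ENNReal.ofReal (-Real.log a * a ^ n) := by
  have hb : 1 - a ≠ 0 := by linarith
  have hpos : ∀ z ∈ Set.Icc (0:ℝ) 1, 0 < 1 - z + a * z := by
    intro z hz
    rcases hz.2.eq_or_lt with h | h
    · subst h; linarith
    · have := mul_nonneg h0.le hz.1
      linarith
  have hl : 0 ≤ -Real.log a := neg_nonneg.2 (Real.log_nonpos h0.le h1.le)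
  rw [lint_aux (fun z => -Real.log (1 - z + a * z) / (1 - a)) (fun z => 1 / (1 - z + a * z))]
  · rw [← ENNReal.ofReal_tsum_of_nonneg (fun n => mul_nonneg hl (pow_nonneg h0.le n))
      ((summable_geometric_of_lt_one h0.le h1).mul_left _), tsum_mul_left,
      tsum_geometric_of_lt_one h0.le h1]
    simp [div_eq_mul_inv]
  · refine ContinuousOn.div_const (ContinuousOn.neg (ContinuousOn.log (by fun_prop) ?_)) _
    intro z hz
    exact (hpos z hz).ne'
  · intro z hz
    have hp := (hpos z ⟨hz.1.le, hz.2.le⟩).ne'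
    have h := (((((hasDerivAt_id z).const_sub 1).add ((hasDerivAt_id z).const_mul a)).log
      hp).neg).div_const (1 - a)
    refine h.congr_deriv ?_
    simp only [Pi.add_apply, id]
    field_simp
    ring
  · intro z hz
    exact (one_div_pos.2 (hpos z ⟨hz.1.le, hz.2.le⟩)).le

lemma lint_xy (n : ℕ) :
    ∫⁻ x in Set.Ioo (0:ℝ) 1, ∫⁻ y in Set.Ioo (0:ℝ) 1,
      ENNReal.ofReal (-Real.log (x * y) * (x * y) ^ n)
      = ENNReal.ofReal (2 * (1 / ((n:ℝ) + 1) ^ 3)) := by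
  have key : ∀ x ∈ Set.Ioo (0:ℝ) 1, ∫⁻ y in Set.Ioo (0:ℝ) 1,
      ENNReal.ofReal (-Real.log (x * y) * (x * y) ^ n)
      = ENNReal.ofReal (-Real.log x * x ^ n) * ENNReal.ofReal (1 / ((n:ℝ) + 1))
        + ENNReal.ofReal (x ^ n) * ENNReal.ofReal (1 / ((n:ℝ) + 1) ^ 2) := by
    intro x hx
    have hlx : 0 ≤ -Real.log x := neg_nonneg.2 (Real.log_nonpos hx.1.le hx.2.le)
    have hxn : 0 ≤ x ^ n := pow_nonneg hx.1.le n
    rw [← lint_pow, ← lint_log, ← lintegral_const_mul _ (by fun_prop),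
      ← lintegral_const_mul _ (by fun_prop), ← lintegral_add_left (by fun_prop)]
    refine setLIntegral_congr_fun measurableSet_Ioo fun y hy => ?_
    have hly : 0 ≤ -Real.log y := neg_nonneg.2 (Real.log_nonpos hy.1.le hy.2.le)
    have hyn : 0 ≤ y ^ n := pow_nonneg hy.1.le n
    rw [← ENNReal.ofReal_mul (by positivity), ← ENNReal.ofReal_mul (by positivity),
      ← ENNReal.ofReal_add (by positivity) (by positivity),
      Real.log_mul hx.1.ne' hy.1.ne']
    congr 1
    ring
  rw [setLIntegral_congr_fun measurableSet_Ioo key, lintegral_add_left (by fun_prop),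
    lintegral_mul_const _ (by fun_prop), lintegral_mul_const _ (by fun_prop), lint_pow, lint_log,
    ← ENNReal.ofReal_mul (by positivity), ← ENNReal.ofReal_mul (by positivity),
      ← ENNReal.ofReal_add (by positivity) (by positivity)]
  congr 1
  field_simp
  ring

lemma summable_cubes : Summable (fun m : ℕ => 1 / ((m : ℝ) + 1) ^ 3) := by
  have := (summable_nat_add_iff 1).2 (Real.summable_one_div_nat_pow.2 (show 1 < 3 by norm_num))
  simpa using this

lemma lint_all :
    ∫⁻ p in Set.Ioo (0:ℝ) 1 ×ˢ Set.Ioo (0:ℝ) 1 ×ˢ Set.Ioo (0:ℝ) 1,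
      ENNReal.ofReal (1 / (1 - p.2.2 + p.1 * p.2.1 * p.2.2))
      = ENNReal.ofReal (2 * ∑' m : ℕ, 1 / ((m : ℝ) + 1) ^ 3) := by
  have e : (volume : Measure (ℝ × ℝ × ℝ)).restrict
      (Set.Ioo (0:ℝ) 1 ×ˢ Set.Ioo (0:ℝ) 1 ×ˢ Set.Ioo (0:ℝ) 1)
      = (volume.restrict (Set.Ioo (0:ℝ) 1)).prod
        ((volume.restrict (Set.Ioo (0:ℝ) 1)).prod (volume.restrict (Set.Ioo (0:ℝ) 1))) := by
    rw [Measure.prod_restrict, Measure.prod_restrict]; rfl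
  rw [e, lintegral_prod _ (by fun_prop)]
  have h1 : ∀ x ∈ Set.Ioo (0:ℝ) 1,
      ∫⁻ q : ℝ × ℝ, ENNReal.ofReal (1 / (1 - q.2 + x * q.1 * q.2))
        ∂((volume.restrict (Set.Ioo (0:ℝ) 1)).prod (volume.restrict (Set.Ioo (0:ℝ) 1)))
      = ∑' n : ℕ, ∫⁻ y in Set.Ioo (0:ℝ) 1,
        ENNReal.ofReal (-Real.log (x * y) * (x * y) ^ n) := by
    intro x hx
    rw [lintegral_prod _ (by fun_prop), ← lintegral_tsum (fun n => by fun_prop)]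
    refine setLIntegral_congr_fun measurableSet_Ioo fun y hy => ?_
    exact lint_z (x * y) (mul_pos hx.1 hy.1) (by nlinarith [hx.1, hx.2, hy.1, hy.2])
  rw [setLIntegral_congr_fun measurableSet_Ioo h1, lintegral_tsum]
  · simp_rw [lint_xy]
    rw [← ENNReal.ofReal_tsum_of_nonneg (fun n => by positivity) (summable_cubes.mul_left 2),
      tsum_mul_left]
  · intro n
    refine Measurable.aemeasurable ?_
    refine Measurable.lintegral_prod_right' (f := fun p : ℝ × ℝ =>
      ENNReal.ofReal (-Real.log (p.1 * p.2) * (p.1 * p.2) ^ n)) ?_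
    fun_prop

/-- The period integral representation
`ζ(3) = (1/2) ∫₀¹∫₀¹∫₀¹ dx dy dz / (1 - z + xyz)`, the triple integral over the open
unit cube being convergent. -/
theorem zeta3_integral_representation :
    IntegrableOn
      (fun p : ℝ × ℝ × ℝ => 1 / (1 - p.2.2 + p.1 * p.2.1 * p.2.2))
      (Set.Ioo (0:ℝ) 1 ×ˢ Set.Ioo (0:ℝ) 1 ×ˢ Set.Ioo (0:ℝ) 1) ∧
    (∑' m : ℕ, 1 / ((m : ℝ) + 1) ^ 3)
      = (1 / 2) * ∫ p in Set.Ioo (0:ℝ) 1 ×ˢ Set.Ioo (0:ℝ) 1 ×ˢ Set.Ioo (0:ℝ) 1,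
          1 / (1 - p.2.2 + p.1 * p.2.1 * p.2.2) := by
  have hm : Measurable (fun p : ℝ × ℝ × ℝ => 1 / (1 - p.2.2 + p.1 * p.2.1 * p.2.2)) := by
    fun_prop
  have hnn : 0 ≤ᵐ[volume.restrict (Set.Ioo (0:ℝ) 1 ×ˢ Set.Ioo (0:ℝ) 1 ×ˢ Set.Ioo (0:ℝ) 1)]
      (fun p : ℝ × ℝ × ℝ => 1 / (1 - p.2.2 + p.1 * p.2.1 * p.2.2)) := by
    refine (ae_restrict_iff' (measurableSet_Ioo.prod
      (measurableSet_Ioo.prod measurableSet_Ioo))).2 (Filter.Eventually.of_forall ?_)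
    rintro ⟨x, y, z⟩ ⟨hx, hy, hz⟩
    have := mul_pos (mul_pos hx.1 hy.1) hz.1
    have hz2 := hz.2
    dsimp only at *
    exact (one_div_pos.2 (by linarith)).le
  refine ⟨⟨hm.aestronglyMeasurable, ?_⟩, ?_⟩
  · rw [hasFiniteIntegral_iff_ofReal hnn, lint_all]
    exact ENNReal.ofReal_lt_top
  · rw [integral_eq_lintegral_of_nonneg_ae hnn hm.aestronglyMeasurable, lint_all,
      ENNReal.toReal_ofReal (mul_nonneg (by norm_num) (tsum_nonneg fun n => by positivity))]
    ring
end

section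
/- For every integer n ≥ 0, A_n·ζ(3) − B_n = (1/2) ∫_0^1 ∫_0^1 ∫_0^1 ( xyz(1−x)(1−y)(1−z) / (1 − z + xyz) )^n · dx dy dz / (1 − z + xyz), the triple integral over the open unit cube being convergent. -/
open MeasureTheory

/-- The second Apéry sequence (with `B_0 = 0`). -/
noncomputable def aperyB (n : ℕ) : ℚ :=
  ∑ ℓ ∈ Finset.range (n + 1),
    ((n.choose ℓ : ℚ)) ^ 2 * (((n + ℓ).choose ℓ : ℚ)) ^ 2 *
      ((∑ m ∈ Finset.Icc 1 n, (1 : ℚ) / (m : ℚ) ^ 3) -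
        ∑ m ∈ Finset.Icc 1 ℓ,
          (-1 : ℚ) ^ m / (2 * (m : ℚ) ^ 3 * (n.choose m : ℚ) * ((n + m).choose m : ℚ)))

/-- `λ_{n,k} = C(n,k) C(n+k,k)` -/
def lam (n k : ℕ) : ℚ := (n.choose k : ℚ) * ((n + k).choose k : ℚ)

def cc (n k : ℕ) : ℚ := (∑ m ∈ Finset.Icc 1 n, (1 : ℚ) / (m : ℚ) ^ 3) -
        ∑ m ∈ Finset.Icc 1 k,
          (-1 : ℚ) ^ m / (2 * (m : ℚ) ^ 3 * (n.choose m : ℚ) * ((n + m).choose m : ℚ))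

lemma lam_zero_right (n : ℕ) : lam n 0 = 1 := by simp [lam]

lemma lam_eq_zero {n k : ℕ} (h : n < k) : lam n k = 0 := by
  simp [lam, Nat.choose_eq_zero_of_lt h]

lemma lam_pos {n k : ℕ} (h : k ≤ n) : 0 < lam n k := by
  have h1 := Nat.choose_pos h
  have h2 : 0 < (n+k).choose k := Nat.choose_pos (by omega)
  unfold lam; positivity

lemma lam_succ_left (n k : ℕ) :
    lam (n+1) k * ((n:ℚ) + 1 - k) = lam n k * ((n:ℚ) + 1 + k) := by
  have h1 : ((n+1).choose k : ℚ) * ((n:ℚ) + 1 - k) = (n.choose k : ℚ) * (n+1) := by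
    rcases le_or_gt k (n+1) with h | h
    · have := Nat.choose_mul_succ_eq n k
      have h' : ((n + 1 - k : ℕ) : ℚ) = (n:ℚ) + 1 - k := by push_cast [Nat.cast_sub h]; ring
      rw [← h']; exact_mod_cast this.symm
    · simp [Nat.choose_eq_zero_of_lt h, Nat.choose_eq_zero_of_lt (by omega : n < k)]
  have h2 : ((n+1+k).choose k : ℚ) * ((n:ℚ) + 1) = ((n+k).choose k : ℚ) * (n+1+k) := by
    have := Nat.choose_mul_succ_eq (n+k) k
    have e : n + k + 1 - k = n + 1 := by omega
    rw [e] at this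
    have e2 : n + k + 1 = n + 1 + k := by ring
    rw [e2] at this
    exact_mod_cast this.symm
  have hn : ((n:ℚ) + 1) ≠ 0 := by positivity
  apply mul_right_cancel₀ hn
  unfold lam
  linear_combination ((n+1+k).choose k : ℚ) * ((n:ℚ)+1) * h1 + (n.choose k : ℚ) * (n+1) * h2

lemma lam_succ_right (n k : ℕ) :
    lam n (k+1) * ((k:ℚ) + 1)^2 = lam n k * (((n:ℚ) + 1 + k) * (n - k)) := by
  have h1 : (n.choose (k+1) : ℚ) * ((k:ℚ) + 1) = (n.choose k : ℚ) * (n-k) := by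
    rcases le_or_gt k n with h | h
    · have := Nat.choose_succ_right_eq n k
      rw [← Nat.cast_sub h]; exact_mod_cast this
    · simp [Nat.choose_eq_zero_of_lt h, Nat.choose_eq_zero_of_lt (by omega : n < k+1)]
  have h2 : ((n+(k+1)).choose (k+1) : ℚ) * ((k:ℚ) + 1) = ((n+k).choose k : ℚ) * (n+1+k) := by
    have := Nat.add_one_mul_choose_eq (n+k) k
    have : (((n+k:ℕ):ℚ) + 1) * ((n+k).choose k : ℚ) = ((n+(k+1)).choose (k+1) : ℚ) * ((k:ℚ) + 1) := by
      exact_mod_cast this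
    push_cast at this
    linear_combination -this
  unfold lam
  linear_combination ((n+(k+1)).choose (k+1) : ℚ) * ((k:ℚ)+1) * h1 + (n.choose k : ℚ) * (n-k) * h2

lemma cc_succ_right (n k : ℕ) (h : k + 1 ≤ n) :
    lam n (k+1) * (cc n (k+1) - cc n k) = (-1)^k / (2 * ((k:ℚ)+1)^3) := by
  have hl := lam_pos h
  have e : cc n (k+1) - cc n k = - ((-1)^(k+1) / (2 * ((k:ℚ)+1)^3 * lam n (k+1))) := by
    unfold cc
    rw [Finset.sum_Icc_succ_top (by omega)]
    unfold lam
    push_cast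
    rw [mul_assoc (2 * ((k:ℚ)+1)^3)]
    ring
  rw [e]
  have : ((k:ℚ)+1) ≠ 0 := by positivity
  field_simp
  ring

lemma cc_zero_succ (n : ℕ) : cc (n+1) 0 - cc n 0 = 1 / ((n:ℚ)+1)^3 := by
  unfold cc
  rw [Finset.sum_Icc_succ_top (by omega)]
  simp

lemma cc_succ_left (n k : ℕ) (h : k ≤ n) :
    lam n k * ((n:ℚ) + 1 + k) * (cc (n+1) k - cc n k) = (-1)^k / ((n:ℚ)+1)^2 := by
  induction k with
  | zero =>
    rw [cc_zero_succ, lam_zero_right]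
    have : ((n:ℚ)+1) ≠ 0 := by positivity
    field_simp
    simp
  | succ k ih =>
    have ih := ih (by omega)
    have h1 := cc_succ_right n k h
    have h2 := cc_succ_right (n+1) k (by omega)
    have r1 := lam_succ_right n k
    have r2 := lam_succ_left n (k+1)
    have hl := lam_pos h
    have hl' := lam_pos (by omega : k ≤ n)
    have hl2 := lam_pos (by omega : k+1 ≤ n+1)
    have hkn : ((k:ℚ) + 1) ≤ n := by exact_mod_cast h
    have p1 : (0:ℚ) < n - k := by linarith
    have p2 : (0:ℚ) < n + 1 + k := by positivity
    have p3 : (0:ℚ) < (k:ℚ) + 1 := by positivity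
    have p4 : (0:ℚ) < (n:ℚ) + 1 := by positivity
    push_cast at r2 ⊢
    -- express everything
    have e0 : lam n k = lam n (k+1) * ((k:ℚ)+1)^2 / (((n:ℚ) + 1 + k) * (n - k)) := by
      field_simp; linarith
    have e2 : lam (n+1) (k+1) = lam n (k+1) * ((n:ℚ)+1+(k+1)) / (n - k) := by
      field_simp; linarith
    have d1 : cc n (k+1) = cc n k + (-1)^k / (2 * ((k:ℚ)+1)^3) / lam n (k+1) := by
      field_simp; field_simp at h1; linarith
    have d2 : cc (n+1) (k+1) = cc (n+1) k + (-1)^k / (2 * ((k:ℚ)+1)^3) / lam (n+1) (k+1) := by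
      field_simp; field_simp at h2; linarith
    have d0 : cc (n+1) k = cc n k + (-1)^k / ((n:ℚ)+1)^2 / (lam n k * ((n:ℚ) + 1 + k)) := by
      field_simp; field_simp at ih; linarith
    rw [d1, d2, d0, e2, e0]
    have p5 : (0:ℚ) < (n:ℚ)+1+(k+1) := by positivity
    rw [pow_succ (-1:ℚ) k]
    generalize (-1:ℚ)^k = s
    field_simp
    ring

/-- polynomial in the recurrence -/
def pp (m : ℚ) : ℚ := 34*m^3 + 51*m^2+27*m+5

def bz (m k : ℕ) : ℚ := 4*(2*(m:ℚ)+1)*(k*(2*k+1)-(2*m+1)^2) * (lam m k)^2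

lemma exX (n k : ℕ) : ∃ X : ℚ, lam n k = X * (n+2-k)*(n+1-k) ∧ lam (n+1) k = X*(n+k+1)*(n+2-k)
   ∧ lam (n+2) k = X*(n+k+1)*(n+k+2) := by
  refine ⟨lam (n+2) k / ((n+k+1)*(n+k+2)), ?_⟩
  have a := lam_succ_left (n+1) k
  have b := lam_succ_left n k
  have p1 : (0:ℚ) < n + k + 1 := by positivity
  have p2 : (0:ℚ) < n + k + 2 := by positivity
  push_cast at a b
  have a' : lam (n+1) k = lam (n+2) k * (n+2-k) / (n+k+2) := by
    field_simp; linear_combination -a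
  have b' : lam n k = lam (n+1) k * (n+1-k) / (n+k+1) := by
    field_simp; linear_combination -b
  refine ⟨?_, ?_, ?_⟩
  · rw [b', a']; field_simp
  · rw [a']; field_simp
  · field_simp

lemma lam_diag (n k : ℕ) :
    lam (n+1) (k+1) * ((k:ℚ)+1)^2 = lam n k * ((n+1+k)*(n+2+k)) := by
  have h1 : ((n+1).choose (k+1) : ℚ) * ((k:ℚ) + 1) = (n.choose k : ℚ) * (n+1) := by
    have := Nat.add_one_mul_choose_eq n k
    have : ((n:ℚ) + 1) * (n.choose k : ℚ) = ((n+1).choose (k+1) : ℚ) * ((k:ℚ) + 1) := by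
      exact_mod_cast this
    linear_combination -this
  have h2 : ((n+1+(k+1)).choose (k+1) : ℚ) * ((k:ℚ) + 1) = ((n+1+k).choose k : ℚ) * (n+2+k) := by
    have := Nat.add_one_mul_choose_eq (n+1+k) k
    have : (((n+1+k:ℕ):ℚ) + 1) * ((n+1+k).choose k : ℚ) = ((n+1+(k+1)).choose (k+1) : ℚ) * ((k:ℚ) + 1) := by
      exact_mod_cast this
    push_cast at this
    linear_combination -this
  have h3 : ((n+1+k).choose k : ℚ) * ((n:ℚ) + 1) = ((n+k).choose k : ℚ) * (n+1+k) := by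
    have := Nat.choose_mul_succ_eq (n+k) k
    have e : n + k + 1 - k = n + 1 := by omega
    rw [e] at this
    have e2 : n + k + 1 = n + 1 + k := by ring
    rw [e2] at this
    exact_mod_cast this.symm
  unfold lam
  linear_combination ((n+1+(k+1)).choose (k+1) : ℚ) * ((k:ℚ)+1) * h1 + (n.choose k : ℚ) * (n+1) * h2
    + (n.choose k : ℚ) * (n+2+k) * h3

lemma exX' (n k : ℕ) : ∃ X : ℚ, lam n (k+1) = X * (n+1-k)*(n-k) ∧ lam (n+1) (k+1) = X*(n+k+2)*(n+1-k)
   ∧ lam (n+2) (k+1) = X*(n+k+2)*(n+k+3) ∧ lam (n+1) k = X * ((k:ℚ)+1)^2 := by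
  obtain ⟨X, h0, h1, h2⟩ := exX n (k+1)
  push_cast at h0 h1 h2
  refine ⟨X, by rw [h0]; ring, by rw [h1]; ring, by rw [h2]; ring, ?_⟩
  have d := lam_diag (n+1) k
  push_cast at d
  have p1 : (0:ℚ) < n + 1 + 1 + k := by positivity
  have p2 : (0:ℚ) < n + 1 + 2 + k := by positivity
  apply mul_right_cancel₀ (mul_pos p1 p2).ne'
  rw [← d, h2]; ring

lemma telA (n k : ℕ) : ((n:ℚ)+2)^3 * lam (n+2) (k+1)^2 - pp (n+1) * lam (n+1) (k+1)^2
    + ((n:ℚ)+1)^3 * lam n (k+1)^2 = bz (n+1) (k+1) - bz (n+1) k := by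
  obtain ⟨X, h0, h1, h2, h3⟩ := exX' n k
  unfold bz pp
  rw [h0, h1, h2, h3]
  push_cast
  ring

lemma telA0 (n : ℕ) : ((n:ℚ)+2)^3 * lam (n+2) 0^2 - pp (n+1) * lam (n+1) 0^2
    + ((n:ℚ)+1)^3 * lam n 0^2 = bz (n+1) 0 := by
  unfold bz pp
  simp only [lam_zero_right]
  push_cast
  ring

def ee (m k : ℕ) : ℚ := bz m k * cc m k - 5 * (2*(m:ℚ)+1)*(-1)^k*k/(m*(m+1)) * lam m k

lemma telB0 (n : ℕ) : ((n:ℚ)+2)^3 * (lam (n+2) 0^2 * cc (n+2) 0)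
    - pp (n+1) * (lam (n+1) 0^2 * cc (n+1) 0)
    + ((n:ℚ)+1)^3 * (lam n 0^2 * cc n 0) = ee (n+1) 0 := by
  have h1 := cc_zero_succ n
  have h2 := cc_zero_succ (n+1)
  have e1 : cc n 0 = cc (n+1) 0 - 1 / ((n:ℚ)+1)^3 := by linarith
  have e2 : cc (n+2) 0 = cc (n+1) 0 + 1 / ((n:ℚ)+2)^3 := by
    push_cast at h2
    have : (n:ℚ)+1+1 = n+2 := by ring
    rw [this] at h2; linarith
  unfold ee bz pp
  simp only [lam_zero_right]
  rw [e1, e2]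
  push_cast
  field_simp
  ring

lemma telB (n k : ℕ) (hk : k ≤ n + 1) : ((n:ℚ)+2)^3 * (lam (n+2) (k+1)^2 * cc (n+2) (k+1))
    - pp (n+1) * (lam (n+1) (k+1)^2 * cc (n+1) (k+1))
    + ((n:ℚ)+1)^3 * (lam n (k+1)^2 * cc n (k+1)) = ee (n+1) (k+1) - ee (n+1) k := by
  obtain ⟨X, h0, h1, h2, h3⟩ := exX' n k
  have q1 : (0:ℚ) < (n:ℚ) + 1 := by positivity
  have q2 : (0:ℚ) < (n:ℚ) + 2 := by positivity
  have q3 : (0:ℚ) < (k:ℚ) + 1 := by positivity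
  have q4 : (0:ℚ) < (n:ℚ) + k + 2 := by positivity
  have q5 : (0:ℚ) < (n:ℚ) + k + 3 := by positivity
  have hX : 0 < X := by
    have := lam_pos hk
    rw [h3] at this
    exact pos_of_mul_pos_left this (by positivity)
  rcases Nat.lt_or_ge n k with hlt | hle
  · -- k = n+1
    obtain rfl : k = n + 1 := by omega
    have c1 := cc_succ_left (n+1) (n+1) le_rfl
    have c2 := cc_succ_right (n+2) (n+1) le_rfl
    have z0 : lam n (n+1+1) = 0 := lam_eq_zero (by omega)
    have z1 : lam (n+1) (n+1+1) = 0 := lam_eq_zero (by omega)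
    rw [h3] at c1
    rw [h2] at c2
    unfold ee bz pp
    rw [z0, z1, h2, h3]
    push_cast at *
    have d2 : cc (n+2) (n+1+1) = cc (n+2) (n+1) + (-1)^(n+1) / (2 * ((n:ℚ)+2)^3) / (X * (2*n+3)*(2*n+4)) := by
      have := c2
      field_simp; field_simp at this; linear_combination this
    have d1 : cc (n+2) (n+1) = cc (n+1) (n+1) + (-1)^(n+1) / ((n:ℚ)+2)^2 / (X * (n+2)^2 * (2*n+3)) := by
      have := c1
      field_simp; field_simp at this; linear_combination this
    rw [d2, d1]
    generalize (-1:ℚ)^(n+1) = s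
    field_simp
    ring
  · have hle' : (k:ℚ) ≤ n := by exact_mod_cast hle
    have q6 : (0:ℚ) < (n:ℚ) + 1 - k := by linarith
    have c1 := cc_succ_left (n+1) (k+1) (by omega)
    have c2 := cc_succ_right (n+1) k (by omega)
    rw [h1] at c1 c2
    push_cast at c1 c2
    have d1 : cc (n+2) (k+1) = cc (n+1) (k+1) + (-1)^(k+1) / ((n:ℚ)+2)^2 / (X * (n+k+2) * (n+1-k) * (n+k+3)) := by
      have := c1
      field_simp; field_simp at this; linear_combination this
    have d2 : cc (n+1) k = cc (n+1) (k+1) - (-1)^k / (2 * ((k:ℚ)+1)^3) / (X * (n+k+2) * (n+1-k)) := by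
      have := c2
      field_simp; field_simp at this; linear_combination -this
    rcases hle.lt_or_eq with hlt | rfl
    · have hlt' : (k:ℚ) < n := by exact_mod_cast hlt
      have q7 : (0:ℚ) < (n:ℚ) - k := by linarith
      have c3 := cc_succ_left n (k+1) (by omega)
      rw [h0] at c3
      push_cast at c3
      have d3 : cc n (k+1) = cc (n+1) (k+1) - (-1)^(k+1) / ((n:ℚ)+1)^2 / (X * (n+1-k) * (n-k) * (n+k+2)) := by
        have := c3
        field_simp; field_simp at this; linear_combination -this
      unfold ee bz pp
      rw [h0, h1, h2, h3, d1, d2, d3, pow_succ (-1:ℚ) k]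
      push_cast
      generalize (-1:ℚ)^k = s
      field_simp
      ring
    · have z0 : lam k (k+1) = 0 := lam_eq_zero (by omega)
      unfold ee bz pp
      rw [z0, h1, h2, h3, d1, d2, pow_succ (-1:ℚ) k]
      push_cast
      generalize (-1:ℚ)^k = s
      field_simp
      ring

lemma aperyA_eq (n N : ℕ) (h : n ≤ N) : (aperyA n : ℚ) = ∑ k ∈ Finset.range (N+1), lam n k ^ 2 := by
  unfold aperyA
  push_cast
  rw [← Finset.sum_subset (Finset.range_mono (by omega : n + 1 ≤ N + 1))]
  · apply Finset.sum_congr rfl; intros; unfold lam; ring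
  · intro x _ hx
    rw [lam_eq_zero (by simpa using hx)]; simp

lemma aperyB_eq (n N : ℕ) (h : n ≤ N) :
    aperyB n = ∑ k ∈ Finset.range (N+1), lam n k ^ 2 * cc n k := by
  unfold aperyB
  rw [← Finset.sum_subset (Finset.range_mono (by omega : n + 1 ≤ N + 1))]
  · apply Finset.sum_congr rfl; intros; unfold lam cc; ring
  · intro x _ hx
    rw [lam_eq_zero (by simpa using hx)]; simp

lemma aperyA_rec (n : ℕ) : ((n:ℚ)+2)^3 * aperyA (n+2) - pp (n+1) * aperyA (n+1)
    + ((n:ℚ)+1)^3 * aperyA n = 0 := by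
  rw [aperyA_eq (n+2) (n+2) le_rfl, aperyA_eq (n+1) (n+2) (by omega), aperyA_eq n (n+2) (by omega)]
  simp only [Finset.mul_sum]
  rw [← Finset.sum_sub_distrib, ← Finset.sum_add_distrib, Finset.sum_range_succ', telA0]
  simp only [telA]
  rw [Finset.sum_range_sub (fun k => bz (n+1) k)]
  have : bz (n+1) (n+2) = 0 := by unfold bz; rw [lam_eq_zero (by omega)]; simp
  rw [this]; ring

lemma aperyB_rec (n : ℕ) : ((n:ℚ)+2)^3 * aperyB (n+2) - pp (n+1) * aperyB (n+1)
    + ((n:ℚ)+1)^3 * aperyB n = 0 := by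
  rw [aperyB_eq (n+2) (n+2) le_rfl, aperyB_eq (n+1) (n+2) (by omega), aperyB_eq n (n+2) (by omega)]
  simp only [Finset.mul_sum]
  rw [← Finset.sum_sub_distrib, ← Finset.sum_add_distrib, Finset.sum_range_succ', telB0]
  rw [Finset.sum_congr rfl (fun k hk => telB n k (by have := Finset.mem_range.1 hk; omega))]
  rw [Finset.sum_range_sub (fun k => ee (n+1) k)]
  have : ee (n+1) (n+2) = 0 := by unfold ee bz; rw [lam_eq_zero (by omega)]; simp
  rw [this]; ring

lemma apery_init : aperyA 0 = 1 ∧ aperyA 1 = 5 ∧ aperyB 0 = 0 ∧ aperyB 1 = 6 := by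
  refine ⟨by decide, by decide, ?_, ?_⟩
  · simp [aperyB]
  · norm_num [aperyB, Finset.sum_range_succ]

noncomputable def cf (n k : ℕ) : ℝ := (-1)^k * (n.choose k : ℝ) * ((n+k).choose n : ℝ)
noncomputable def rr (n : ℕ) (t : ℝ) : ℝ := ∑ k ∈ Finset.range (n+1), cf n k / (t + k)
noncomputable def qq (n : ℕ) (t : ℝ) : ℝ := ∑ k ∈ Finset.range (n+1), cf n k / (t + k)^2

lemma aeval_legendre (n : ℕ) (x : ℝ) : Polynomial.aeval x (Polynomial.shiftedLegendre n)
    = ∑ k ∈ Finset.range (n+1), cf n k * x^k := by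
  unfold Polynomial.shiftedLegendre cf
  simp

lemma cf_sum (n : ℕ) : ∑ k ∈ Finset.range (n+1), cf n k = (-1)^n := by
  have h := Polynomial.shiftedLegendre_eval_symm n (1:ℝ)
  rw [aeval_legendre, aeval_legendre] at h
  simp only [one_pow, mul_one, sub_self] at h
  rw [h, Finset.sum_range_succ']
  simp [cf]

lemma cf_top (n : ℕ) : cf n (n+1) = 0 := by simp [cf]

lemma cf_rec (n k : ℕ) : cf (n+1) k * ((n:ℝ)+1-k) = cf n k * ((n:ℝ)+1+k) := by
  have h := lam_succ_left n k
  have h' : ((lam (n+1) k * ((n:ℚ) + 1 - k) : ℚ) : ℝ) = ((lam n k * ((n:ℚ) + 1 + k) : ℚ) : ℝ) := by rw [h]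
  unfold lam at h'
  push_cast at h'
  have s1 : (n+1+k).choose k = (n+1+k).choose (n+1) := by
    rw [Nat.choose_symm_add]
  have s2 : (n+k).choose k = (n+k).choose n := by
    rw [Nat.choose_symm_add]
  rw [s1, s2] at h'
  unfold cf
  linear_combination (-1)^k * h'

lemma rr_succ (n : ℕ) {t : ℝ} (ht : 0 < t) :
    rr (n+1) t * (t + n + 1) = (n + 1 - t) * rr n t := by
  have e1 : rr (n+1) t * (t + n + 1) = ∑ k ∈ Finset.range (n+2), cf (n+1) k
      + ∑ k ∈ Finset.range (n+2), cf (n+1) k * ((n:ℝ)+1-k) / (t + k) := by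
    unfold rr
    rw [Finset.sum_mul, ← Finset.sum_add_distrib]
    apply Finset.sum_congr rfl
    intro k _
    have : 0 < t + k := by positivity
    field_simp; ring
  have e2 : (n + 1 - t) * rr n t = - ∑ k ∈ Finset.range (n+1), cf n k
      + ∑ k ∈ Finset.range (n+2), cf n k * ((n:ℝ)+1+k) / (t + k) := by
    unfold rr
    rw [Finset.sum_range_succ _ (n+1), cf_top, Finset.mul_sum, ← Finset.sum_neg_distrib]
    simp only [zero_mul, zero_div, add_zero]
    rw [← Finset.sum_add_distrib]
    apply Finset.sum_congr rfl
    intro k _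
    have : 0 < t + k := by positivity
    field_simp; ring
  rw [e1, e2, cf_sum n, cf_sum (n+1)]
  simp only [cf_rec]
  ring

lemma rr_zero (t : ℝ) : rr 0 t = 1/t := by simp [rr, cf]

lemma rr_shift (n : ℕ) {t : ℝ} (ht : 0 < t) :
    rr (n+1) (t+1) * ((t+n+1)*(t+n+2)) = - t^2 * rr n t := by
  induction n with
  | zero =>
    have h := rr_succ 0 (t := t+1) (by positivity)
    rw [rr_zero] at h ⊢
    push_cast at *
    have h2 : rr (0+1) (t+1) = ((0+1-(t+1)) * (1/(t+1))) / (t+1+0+1) := by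
      rw [← h]; field_simp
    rw [h2]; field_simp; ring
  | succ n ih =>
    have h1 := rr_succ (n+1) (t := t+1) (by positivity)
    have h2 := rr_succ n ht
    push_cast at *
    have p : 0 < t + n + 1 := by positivity
    apply mul_right_cancel₀ p.ne'
    linear_combination (t+n+1)*(t+n+2)*h1 + (n+1-t)*ih + t^2*h2

lemma rr_one (n : ℕ) : rr (n+1) 1 = 0 := by
  induction n with
  | zero => norm_num [rr, cf, Finset.sum_range_succ]
  | succ n ih =>
    have h := rr_succ (n+1) (t := 1) one_pos
    rw [ih, mul_zero] at h
    have : (1 + ((n+1:ℕ):ℝ) + 1) ≠ 0 := by positivity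
    exact (mul_eq_zero.1 h).resolve_right this

lemma rr_deriv (n : ℕ) {t : ℝ} (ht : 0 < t) : HasDerivAt (rr n) (-(qq n t)) t := by
  unfold rr qq
  rw [← Finset.sum_neg_distrib]
  apply HasDerivAt.fun_sum
  intro k _
  have p : t + k ≠ 0 := by positivity
  have := (((hasDerivAt_id t).add_const (k:ℝ)).inv p).const_mul (cf n k)
  simp only [id] at this
  refine (this.congr_deriv ?_)
  field_simp

noncomputable def gg (n : ℕ) (t : ℝ) : ℝ := 4*(2*n+1)*(t*(2*t-1)-(2*n+1)^2) * rr n t^2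
noncomputable def gd (n : ℕ) (t : ℝ) : ℝ := 4*(2*n+1)*(4*t-1) * rr n t^2
  - 4*(2*n+1)*(t*(2*t-1)-(2*n+1)^2) * (2 * rr n t * qq n t)

lemma gg_deriv (n : ℕ) {t : ℝ} (ht : 0 < t) : HasDerivAt (gg n) (gd n t) t := by
  have h := (rr_deriv n ht).pow 2
  have h1 : HasDerivAt (fun t : ℝ => 4*(2*(n:ℝ)+1)*(t*(2*t-1)-(2*n+1)^2)) (4*(2*n+1)*(4*t-1)) t := by
    have := ((((hasDerivAt_id t).mul (((hasDerivAt_id t).const_mul 2).sub_const 1)).sub_const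
      ((2*(n:ℝ)+1)^2)).const_mul (4*(2*(n:ℝ)+1)))
    refine this.congr_deriv ?_
    simp only [id]; ring
  have := h1.mul h
  refine this.congr_deriv ?_
  unfold gd
  simp
  ring

noncomputable def ss (n : ℕ) (t : ℝ) : ℝ := 2 * rr n t * qq n t

lemma rr2_deriv (n : ℕ) {t : ℝ} (ht : 0 < t) : HasDerivAt (fun t => rr n t^2) (-(ss n t)) t := by
  have h := (rr_deriv n ht).pow 2
  refine h.congr_deriv ?_
  unfold ss
  simp

noncomputable def ppr (m : ℝ) : ℝ := 34*m^3 + 51*m^2+27*m+5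

lemma rr_tel (n : ℕ) {t : ℝ} (ht : 0 < t) :
    ((n:ℝ)+2)^3 * rr (n+2) t^2 - ppr (n+1) * rr (n+1) t^2 + ((n:ℝ)+1)^3 * rr n t^2
      = gg (n+1) t - gg (n+1) (t+1) := by
  have h1 := rr_succ n ht
  have h2 := rr_succ (n+1) ht
  have h3 := rr_shift n ht
  push_cast at h2
  have p1 : 0 < t + n + 1 := by positivity
  have p2 : 0 < t + n + 2 := by positivity
  have e1 : rr (n+1) t = (n + 1 - t) * rr n t / (t+n+1) := by field_simp; linarith
  have e2 : rr (n+2) t = (n + 2 - t) * rr (n+1) t / (t+n+2) := by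
    field_simp; linear_combination h2
  have e3 : rr (n+1) (t+1) = - t^2 * rr n t / ((t+n+1)*(t+n+2)) := by
    field_simp; linear_combination h3
  unfold gg ppr
  rw [e3, e2, e1]
  push_cast
  field_simp
  ring

lemma rr_tel0 {t : ℝ} (ht : 0 < t) :
    rr 1 t^2 - 5 * rr 0 t^2 = gg 0 t - gg 0 (t+1) := by
  have h1 := rr_succ 0 ht
  rw [rr_zero] at h1
  push_cast at h1
  have e1 : rr 1 t = (1 - t) * (1/t) / (t+1) := by field_simp; field_simp at h1; linarith
  unfold gg
  rw [e1, rr_zero, rr_zero]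
  push_cast
  field_simp
  ring

lemma ss_tel (n : ℕ) {t : ℝ} (ht : 0 < t) :
    ((n:ℝ)+2)^3 * ss (n+2) t - ppr (n+1) * ss (n+1) t + ((n:ℝ)+1)^3 * ss n t
      = gd (n+1) (t+1) - gd (n+1) t := by
  have hL := (((rr2_deriv (n+2) ht).const_mul (((n:ℝ)+2)^3)).sub
    ((rr2_deriv (n+1) ht).const_mul (ppr (n+1)))).add ((rr2_deriv n ht).const_mul (((n:ℝ)+1)^3))
  have hR := (gg_deriv (n+1) ht).sub ((gg_deriv (n+1) (by positivity : 0 < t + 1)).comp_add_const t 1)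
  have hev := hR.congr_of_eventuallyEq (f₁ := _) (by
    filter_upwards [lt_mem_nhds ht] with s hs
    exact rr_tel n hs)
  have := hL.unique hev
  linear_combination -this

lemma ss_tel0 {t : ℝ} (ht : 0 < t) :
    ss 1 t - 5 * ss 0 t = gd 0 (t+1) - gd 0 t := by
  have hL := ((rr2_deriv 1 ht)).sub ((rr2_deriv 0 ht).const_mul 5)
  have hR := (gg_deriv 0 ht).sub ((gg_deriv 0 (by positivity : 0 < t + 1)).comp_add_const t 1)
  have hev := hR.congr_of_eventuallyEq (f₁ := _) (by
    filter_upwards [lt_mem_nhds ht] with s hs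
    exact rr_tel0 hs)
  have := hL.unique hev
  linear_combination -this

open Filter Topology in
lemma gd_tendsto (n : ℕ) : Tendsto (fun N : ℕ => gd n ((N:ℝ)+1)) atTop (𝓝 0) := by
  have hinv : Tendsto (fun t : ℝ => 1/t) atTop (𝓝 0) := by
    simpa using tendsto_inv_atTop_zero (𝕜 := ℝ)
  have hratio : ∀ k : ℕ, Tendsto (fun t : ℝ => t/(t+k)) atTop (𝓝 1) := by
    intro k
    have : Tendsto (fun t : ℝ => 1/(1 + k * (1/t))) atTop (𝓝 (1/(1+k*0))) :=
      tendsto_const_nhds.div (tendsto_const_nhds.add (hinv.const_mul _)) (by simp)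
    simp only [mul_zero, add_zero, div_one] at this
    refine this.congr' ?_
    filter_upwards [eventually_gt_atTop 0] with t ht
    field_simp
  have hr : ∃ a, Tendsto (fun t : ℝ => t * rr n t) atTop (𝓝 a) := by
    refine ⟨∑ k ∈ Finset.range (n+1), cf n k * 1, ?_⟩
    have : (fun t : ℝ => t * rr n t) = fun t => ∑ k ∈ Finset.range (n+1), cf n k * (t/(t+k)) := by
      ext t; unfold rr; rw [Finset.mul_sum]; apply Finset.sum_congr rfl; intros; ring
    rw [this]
    exact tendsto_finsetSum _ fun k _ => (hratio k).const_mul _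
  have hq : ∃ a, Tendsto (fun t : ℝ => t^2 * qq n t) atTop (𝓝 a) := by
    refine ⟨∑ k ∈ Finset.range (n+1), cf n k * 1^2, ?_⟩
    have : (fun t : ℝ => t^2 * qq n t) = fun t => ∑ k ∈ Finset.range (n+1), cf n k * (t/(t+k))^2 := by
      ext t; unfold qq; rw [Finset.mul_sum]; apply Finset.sum_congr rfl; intros; rw [div_pow]; ring
    rw [this]
    exact tendsto_finsetSum _ fun k _ => ((hratio k).pow 2).const_mul _
  obtain ⟨a, ha⟩ := hr
  obtain ⟨b, hb⟩ := hq
  have key : Tendsto (fun t : ℝ => 4*(2*n+1)*((4 - 1/t) * (1/t)) * (t * rr n t)^2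
    - 4*(2*n+1)*((2 - 1/t-(2*n+1)^2 * (1/t)^2) * (1/t)) * (2 * (t * rr n t) * (t^2 * qq n t))) atTop
    (𝓝 (4*(2*n+1)*((4 - 0) * 0) * a^2
    - 4*(2*n+1)*((2 - 0-(2*n+1)^2 * 0^2) * 0) * (2 * a * b))) := by
    refine Tendsto.sub ?_ ?_
    · exact (((tendsto_const_nhds.sub hinv).mul hinv).const_mul _).mul (ha.pow 2)
    · exact ((((tendsto_const_nhds.sub hinv).sub ((hinv.pow 2).const_mul _)).mul hinv).const_mul _).mul
        ((ha.const_mul 2).mul hb)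
  simp only [mul_zero, zero_mul, sub_zero] at key
  have key2 : Tendsto (gd n) atTop (𝓝 0) := by
    refine key.congr' ?_
    filter_upwards [eventually_gt_atTop 0] with t ht
    unfold gd
    field_simp
  have := key2.comp ((tendsto_natCast_atTop_atTop (R := ℝ)).atTop_add (tendsto_const_nhds (x := (1:ℝ))))
  exact this

open Filter Topology in
theorem series_main (J : ℕ → ℝ) (hJ : ∀ n, HasSum (fun j : ℕ => ss n ((j:ℝ)+1)) (J n)) (n : ℕ) :
    J n = 2 * ((aperyA n : ℝ) * (∑' m : ℕ, 1 / ((m : ℝ) + 1) ^ 3) - (aperyB n : ℝ)) := by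
  set Z := ∑' m : ℕ, 1 / ((m : ℝ) + 1) ^ 3 with hZ
  have tele : ∀ n : ℕ, ∀ f : ℕ → ℝ, ∀ S, HasSum f S → (∀ j : ℕ, f j = gd n (((j+1:ℕ):ℝ)+1) - gd n ((j:ℝ)+1))
      → S = - gd n 1 := by
    intro n f S hS hf
    have h1 := hS.tendsto_sum_nat
    have h2 : Tendsto (fun N : ℕ => gd n ((N:ℝ)+1) - gd n 1) atTop (𝓝 (0 - gd n 1)) :=
      (gd_tendsto n).sub_const _
    have h3 : (fun N => ∑ i ∈ Finset.range N, f i) = (fun N : ℕ => gd n ((N:ℝ)+1) - gd n 1) := by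
      ext N
      simp only [hf]
      rw [Finset.sum_range_sub (fun j : ℕ => gd n ((j:ℝ)+1))]
      simp
    rw [h3] at h1
    rw [tendsto_nhds_unique h1 h2]; ring
  have r0 : J 0 = 2 * Z := by
    rw [← (hJ 0).tsum_eq, hZ, ← tsum_mul_left]
    congr 1; ext j
    simp [ss, rr, qq, cf]
    field_simp
  have r1 : J 1 = 5 * J 0 - 12 := by
    have h := (hJ 1).sub ((hJ 0).mul_left 5)
    have := tele 0 _ _ h (fun j => by
      rw [ss_tel0 (by positivity)]; push_cast; rfl)
    have g : gd 0 1 = 12 := by simp [gd, rr, qq, cf]; norm_num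
    rw [g] at this; linarith
  have rec2 : ∀ n : ℕ, ((n:ℝ)+2)^3 * J (n+2) - ppr (n+1) * J (n+1) + ((n:ℝ)+1)^3 * J n = 0 := by
    intro n
    have h := (((hJ (n+2)).mul_left (((n:ℝ)+2)^3)).sub ((hJ (n+1)).mul_left (ppr (n+1)))).add
      ((hJ n).mul_left (((n:ℝ)+1)^3))
    have := tele (n+1) _ _ h (fun j => by
      rw [ss_tel n (by positivity)]; push_cast; rfl)
    rw [this]
    simp [gd, rr_one]
  have main : ∀ n : ℕ, J n = 2 * ((aperyA n : ℝ) * Z - (aperyB n : ℝ)) ∧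
      J (n+1) = 2 * ((aperyA (n+1) : ℝ) * Z - (aperyB (n+1) : ℝ)) := by
    obtain ⟨a0, a1, b0, b1⟩ := apery_init
    intro n
    induction n with
    | zero =>
      rw [zero_add, a0, a1, b0, b1, r1, r0]
      push_cast
      constructor <;> ring
    | succ n ih =>
      refine ⟨ih.2, ?_⟩
      have hA : ((((n:ℚ)+2)^3 * aperyA (n+2) - pp (n+1) * aperyA (n+1)
        + ((n:ℚ)+1)^3 * aperyA n : ℚ) : ℝ) = 0 := by rw [aperyA_rec]; simp
      have hB : ((((n:ℚ)+2)^3 * aperyB (n+2) - pp (n+1) * aperyB (n+1)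
        + ((n:ℚ)+1)^3 * aperyB n : ℚ) : ℝ) = 0 := by rw [aperyB_rec]; simp
      have hr := rec2 n
      rw [ih.1, ih.2] at hr
      unfold pp at hA hB
      unfold ppr at hr
      push_cast at hA hB
      have p : ((n:ℝ)+2)^3 ≠ 0 := by positivity
      apply mul_left_cancel₀ p
      linear_combination hr - 2 * Z * hA + 2 * hB
  exact (main n).1

noncomputable def leg (n : ℕ) (x : ℝ) : ℝ := Polynomial.aeval x (Polynomial.shiftedLegendre n)

open Polynomial in
lemma parts_aux (n : ℕ) {w : ℝ} (hw : 0 < w) (j m : ℕ) (h : j + m = n) :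
    ∫ y in (0:ℝ)..1, (derivative^[j] (X^n * (1 - X)^n : ℝ[X])).eval y * ((m.factorial:ℝ) / (y+w)^(m+1))
     = n.factorial * ∫ y in (0:ℝ)..1, y^n * (1-y)^n / (y+w)^(n+1) := by
  induction j generalizing m with
  | zero =>
    obtain rfl : m = n := by omega
    rw [← intervalIntegral.integral_const_mul]
    congr 1; ext y
    simp; ring
  | succ j ih =>
    rw [← ih (m+1) (by omega)]
    set p : ℝ[X] := derivative^[j] (X^n * (1 - X)^n : ℝ[X]) with hp
    have hp0 : p.eval 0 = 0 := by
      have h1 : (X:ℝ[X])^(n-j) ∣ p := pow_sub_dvd_iterate_derivative_of_pow_dvd j (Dvd.intro _ rfl)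
      obtain ⟨q, hq⟩ := h1
      rw [hq]; simp; left; omega
    have hp1 : p.eval 1 = 0 := by
      have h1 : (1 - X:ℝ[X])^(n-j) ∣ p := pow_sub_dvd_iterate_derivative_of_pow_dvd j (Dvd.intro_left _ rfl)
      obtain ⟨q, hq⟩ := h1
      rw [hq]; simp; left; omega
    have hpos : ∀ y ∈ Set.uIcc (0:ℝ) 1, 0 < y + w := by
      intro y hy
      rw [Set.uIcc_of_le zero_le_one] at hy
      linarith [hy.1]
    have key := intervalIntegral.integral_mul_deriv_eq_deriv_mul
      (a := (0:ℝ)) (b := 1) (u := fun y => (m.factorial:ℝ) / (y+w)^(m+1)) (v := fun y => p.eval y)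
      (u' := fun y => - (((m+1).factorial:ℝ) / (y+w)^(m+1+1))) (v' := fun y => (derivative p).eval y)
      (by
        intro y hy
        have := hpos y hy
        have h := (((hasDerivAt_id y).add_const w).pow (m+1)).inv (pow_ne_zero _ this.ne')
        have h := h.const_mul (m.factorial : ℝ)
        refine h.congr_deriv ?_
        simp only [id, Nat.factorial_succ]
        push_cast
        simp
        field_simp
        ring)
      (fun y _ => p.hasDerivAt y)
      (by
        apply ContinuousOn.intervalIntegrable
        refine ContinuousOn.neg (ContinuousOn.div continuousOn_const (by fun_prop) ?_)
        intro y hy; exact pow_ne_zero _ (hpos y hy).ne')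
      (by apply Continuous.intervalIntegrable; exact (derivative p).continuous)
    simp only [hp0, hp1, mul_zero, sub_zero, zero_sub] at key
    rw [Function.iterate_succ_apply', ← hp]
    calc _ = ∫ y in (0:ℝ)..1, (m.factorial:ℝ) / (y+w)^(m+1) * (derivative p).eval y := by
          congr 1; ext y; ring
      _ = _ := by
          rw [key, ← intervalIntegral.integral_neg]
          congr 1; ext y; ring

open Polynomial in
lemma parts (n : ℕ) {w : ℝ} (hw : 0 < w) :
    ∫ y in (0:ℝ)..1, y^n * (1-y)^n / (y+w)^(n+1) = ∫ y in (0:ℝ)..1, leg n y / (y+w) := by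
  have h := parts_aux n hw n 0 (by omega)
  have hf : (n.factorial : ℝ) ≠ 0 := by positivity
  apply mul_left_cancel₀ hf
  rw [← h, ← intervalIntegral.integral_const_mul]
  congr 1; ext y
  have e := factorial_mul_shiftedLegendre_eq n
  have e2 := congrArg (fun p : ℤ[X] => aeval y p) e
  have e3 : aeval y (derivative^[n] (X ^ n * (1 - (X : ℤ[X])) ^ n))
      = (derivative^[n] (X^n * (1 - X)^n : ℝ[X])).eval y := by
    rw [← Polynomial.eval_map_algebraMap, ← Polynomial.iterate_derivative_map]
    simp
  rw [e3] at e2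
  rw [← e2]
  simp [leg]
  ring

lemma parts' (n : ℕ) {w : ℝ} (hw : 0 < w) :
    ∫ x in (0:ℝ)..1, x^n * (1-x)^n * w^n / (1+x*w)^(n+1) = ∫ x in (0:ℝ)..1, leg n x / (1+x*w) := by
  have h := parts n (inv_pos.2 hw)
  have h2 := congrArg (fun s => w⁻¹ * s) h
  simp only [← intervalIntegral.integral_const_mul] at h2
  calc _ = _ := by
        apply intervalIntegral.integral_congr
        intro x hx
        rw [Set.uIcc_of_le zero_le_one] at hx
        have hx0 := hx.1
        have : 0 < 1 + x * w := by positivity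
        have e : x + w⁻¹ = (1 + x*w)/w := by field_simp; ring
        show _ = w⁻¹ * (x^n * (1-x)^n / (x+w⁻¹)^(n+1))
        rw [e, div_pow]
        field_simp
        ring
    _ = _ := h2
    _ = _ := by
        apply intervalIntegral.integral_congr
        intro x hx
        rw [Set.uIcc_of_le zero_le_one] at hx
        have hx0 := hx.1
        have : 0 < 1 + x * w := by positivity
        have e : x + w⁻¹ = (1 + x*w)/w := by field_simp; ring
        show w⁻¹ * (leg n x / (x+w⁻¹)) = _
        rw [e]
        field_simp

noncomputable abbrev mu : Measure ℝ := volume.restrict (Set.Ioo (0:ℝ) 1)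
noncomputable abbrev nu : Measure ℝ := volume.restrict (Set.Ioi (0:ℝ))

lemma int_eq_mu (f : ℝ → ℝ) : ∫ x in (0:ℝ)..1, f x = ∫ x, f x ∂mu := by
  rw [intervalIntegral.integral_of_le zero_le_one, integral_Ioc_eq_integral_Ioo]

lemma mu_of_interval {f : ℝ → ℝ} (h : IntervalIntegrable f volume 0 1) : Integrable f mu := by
  have := (intervalIntegrable_iff_integrableOn_Ioo_of_le zero_le_one).1 h
  exact this

lemma int_sqrt : Integrable (fun x : ℝ => 1/√x) mu := by
  have h := mu_of_interval (intervalIntegral.intervalIntegrable_rpow' (a := 0) (b := 1) (r := -(1/2)) (by norm_num))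
  refine h.congr ?_
  filter_upwards [ae_restrict_mem measurableSet_Ioo] with x hx
  rw [Real.rpow_neg hx.1.le, Real.sqrt_eq_rpow, ← one_div]

lemma int_sqrt' : Integrable (fun x : ℝ => 1/√(1-x)) mu := by
  apply mu_of_interval
  have h : IntervalIntegrable (fun x : ℝ => 1/√x) volume 0 1 :=
    (intervalIntegrable_iff_integrableOn_Ioo_of_le zero_le_one).2 int_sqrt
  have := (h.comp_sub_left 1).symm
  simpa using this

noncomputable def hh (w : ℝ) : ℝ := if w ≤ 1 then 1/√w else 1/(w*√w)

lemma int_hh : Integrable hh nu := by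
  have : Set.Ioi (0:ℝ) = Set.Ioc 0 1 ∪ Set.Ioi 1 := (Set.Ioc_union_Ioi_eq_Ioi zero_le_one).symm
  show IntegrableOn hh (Set.Ioi 0)
  rw [this]
  apply IntegrableOn.union
  · have h : IntegrableOn (fun x : ℝ => 1/√x) (Set.Ioc 0 1) :=
      (integrableOn_Ioc_iff_integrableOn_Ioo).2 int_sqrt
    refine h.congr_fun ?_ measurableSet_Ioc
    intro x hx
    simp [hh, hx.2]
  · have h := integrableOn_Ioi_rpow_of_lt (a := -(3/2)) (c := 1) (by norm_num) one_pos
    refine h.congr_fun ?_ measurableSet_Ioi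
    intro x hx
    have hx : 1 < x := hx
    have hx0 : 0 < x := by linarith
    simp only [hh, not_le.2 hx, if_false]
    rw [Real.rpow_neg hx0.le, one_div, Real.sqrt_eq_rpow]
    congr 1
    rw [show (3/2:ℝ) = 1 + 1/2 by norm_num, Real.rpow_add hx0, Real.rpow_one]

noncomputable def g0 (p : (ℝ × ℝ) × ℝ) : ℝ := 1 / ((p.1.2 + p.2) * (1 + p.1.1 * p.2))

noncomputable abbrev mmn : Measure ((ℝ × ℝ) × ℝ) := (mu.prod mu).prod nu

lemma g0_bound {x y w : ℝ} (hx : 0 < x) (hx1 : x < 1) (hy : 0 < y) (hy1 : y < 1) (hw : 0 < w) :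
    g0 ((x,y),w) ≤ (1/√x * (1/√y)) * hh w := by
  have sx : 0 < √x := Real.sqrt_pos.2 hx
  have sy : 0 < √y := Real.sqrt_pos.2 hy
  have sw : 0 < √w := Real.sqrt_pos.2 hw
  have ex : √x^2 = x := Real.sq_sqrt hx.le
  have ey : √y^2 = y := Real.sq_sqrt hy.le
  have ew : √w^2 = w := Real.sq_sqrt hw.le
  have sx1 : √x ≤ 1 := Real.sqrt_le_one.2 hx1.le
  have sy1 : √y ≤ 1 := Real.sqrt_le_one.2 hy1.le
  unfold g0 hh
  simp only
  split_ifs with h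
  · rw [one_div_mul_one_div, one_div_mul_one_div]
    apply one_div_le_one_div_of_le (by positivity)
    have h1 : √y * √w ≤ y + w := by nlinarith [sq_nonneg (√y - √w)]
    have h2 : √x ≤ 1 + x * w := by have : 0 ≤ x * w := by positivity
                                   linarith
    calc √x * √y * √w = (√y * √w) * √x := by ring
      _ ≤ _ := by gcongr
  · rw [one_div_mul_one_div, one_div_mul_one_div]
    apply one_div_le_one_div_of_le (by positivity)
    have h1 : √y * w ≤ y + w := by nlinarith
    have h2 : √x * √w ≤ 1 + x * w := by
      nlinarith [sq_nonneg (√x * √w - 1), mul_pow √x √w 2, mul_pos sx sw]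
    calc √x * √y * (w * √w) = (√y * w) * (√x * √w) := by ring
      _ ≤ _ := by gcongr

lemma ae_mmn (P : (ℝ × ℝ) × ℝ → Prop)
    (h : ∀ x y w : ℝ, 0 < x → x < 1 → 0 < y → y < 1 → 0 < w → P ((x,y),w)) : ∀ᵐ p ∂mmn, P p := by
  have : mmn = volume.restrict ((Set.Ioo (0:ℝ) 1 ×ˢ Set.Ioo (0:ℝ) 1) ×ˢ Set.Ioi (0:ℝ)) := by
    unfold mmn mu nu
    rw [Measure.prod_restrict, Measure.prod_restrict]; rfl
  rw [this]
  filter_upwards [ae_restrict_mem ((measurableSet_Ioo.prod measurableSet_Ioo).prod measurableSet_Ioi)] with p hp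
  exact h p.1.1 p.1.2 p.2 hp.1.1.1 hp.1.1.2 hp.1.2.1 hp.1.2.2 hp.2

lemma ae_mm (P : ℝ × ℝ → Prop)
    (h : ∀ x y : ℝ, 0 < x → x < 1 → 0 < y → y < 1 → P (x,y)) : ∀ᵐ p ∂(mu.prod mu), P p := by
  have : mu.prod mu = volume.restrict (Set.Ioo (0:ℝ) 1 ×ˢ Set.Ioo (0:ℝ) 1) := by
    unfold mu
    rw [Measure.prod_restrict]; rfl
  rw [this]
  filter_upwards [ae_restrict_mem (measurableSet_Ioo.prod measurableSet_Ioo)] with p hp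
  exact h p.1 p.2 hp.1.1 hp.1.2 hp.2.1 hp.2.2

/-- domination on `mmn` -/
lemma integrable_mmn (f : (ℝ × ℝ) × ℝ → ℝ) (hf : Measurable f)
    (h : ∀ x y w : ℝ, 0 < x → x < 1 → 0 < y → y < 1 → 0 < w → |f ((x,y),w)| ≤ g0 ((x,y),w)) :
    Integrable f mmn := by
  have hb : Integrable (fun p : (ℝ × ℝ) × ℝ => (1/√p.1.1 * (1/√p.1.2)) * hh p.2) mmn :=
    (int_sqrt.mul_prod int_sqrt).mul_prod int_hh
  refine hb.mono' hf.aestronglyMeasurable ?_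
  apply ae_mmn
  intro x y w hx hx1 hy hy1 hw
  exact (h x y w hx hx1 hy hy1 hw).trans (g0_bound hx hx1 hy hy1 hw)

noncomputable def ff (n : ℕ) (p : ℝ × ℝ × ℝ) : ℝ :=
  (p.1 * p.2.1 * p.2.2 * (1 - p.1) * (1 - p.2.1) * (1 - p.2.2) /
            (1 - p.2.2 + p.1 * p.2.1 * p.2.2)) ^ n *
          (1 / (1 - p.2.2 + p.1 * p.2.1 * p.2.2))

lemma cube_eq : (volume : Measure (ℝ × ℝ × ℝ)).restrict
    (Set.Ioo (0:ℝ) 1 ×ˢ Set.Ioo (0:ℝ) 1 ×ˢ Set.Ioo (0:ℝ) 1) = mu.prod (mu.prod mu) := by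
  unfold mu
  rw [Measure.prod_restrict, Measure.prod_restrict]; rfl

lemma int_ff (n : ℕ) : Integrable (ff n) (mu.prod (mu.prod mu)) := by
  have hb : Integrable (fun p : ℝ × ℝ × ℝ => (1/√p.1) * ((1/√p.2.1) * (1/√p.2.2 * (1/√(1-p.2.2)))))
      (mu.prod (mu.prod mu)) := by
    suffices hz : Integrable (fun z : ℝ => 1/√z * (1/√(1-z))) mu from
      int_sqrt.mul_prod (int_sqrt.mul_prod hz)
    have hs : Integrable (fun z : ℝ => 2 * (1/√z + 1/√(1-z))) mu := (int_sqrt.add int_sqrt').const_mul 2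
    refine hs.mono' (by apply Measurable.aestronglyMeasurable; fun_prop) ?_
    filter_upwards [ae_restrict_mem measurableSet_Ioo] with z hz
    have sz : 0 < √z := Real.sqrt_pos.2 hz.1
    have sz' : 0 < √(1-z) := Real.sqrt_pos.2 (by linarith [hz.2])
    have e : √z^2 = z := Real.sq_sqrt hz.1.le
    have e' : √(1-z)^2 = 1-z := Real.sq_sqrt (by linarith [hz.2])
    rw [Real.norm_of_nonneg (by positivity)]
    have : 1 ≤ 2 * (√z + √(1-z)) := by
      nlinarith [mul_pos sz sz', Real.sqrt_le_one.2 hz.2.le, Real.sqrt_le_one.2 (by linarith [hz.1] : 1 - z ≤ 1)]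
    field_simp
    linarith
  refine hb.mono' (by unfold ff; apply Measurable.aestronglyMeasurable; fun_prop) ?_
  rw [← cube_eq]
  filter_upwards [ae_restrict_mem (measurableSet_Ioo.prod (measurableSet_Ioo.prod measurableSet_Ioo))] with p hp
  obtain ⟨x, y, z⟩ := p
  obtain ⟨⟨hx, hx1⟩, ⟨hy, hy1⟩, ⟨hz, hz1⟩⟩ := hp
  simp only at hx hx1 hy hy1 hz hz1
  unfold ff
  simp only
  have a1 : 0 < 1 - x := by linarith
  have a2 : 0 < 1 - y := by linarith
  have a3 : 0 < 1 - z := by linarith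
  have hD : 0 < 1 - z + x*y*z := by positivity
  rw [Real.norm_of_nonneg (by positivity)]
  have hle : x * y * z * (1 - x) * (1 - y) * (1 - z) / (1 - z + x * y * z) ≤ 1 := by
    rw [div_le_one hD]
    have hxyz : x * y * z ≤ 1 := by
      have : x * y ≤ 1 := by nlinarith
      nlinarith [mul_pos hx hy]
    have : x * y * z * (1 - x) * (1 - y) ≤ 1 := by
      have h1 : x * y * z * (1-x) ≤ 1 := by nlinarith [mul_pos (mul_pos hx hy) hz]
      nlinarith [mul_pos (mul_pos (mul_pos hx hy) hz) a1]
    nlinarith [mul_pos (mul_pos hx hy) hz]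
  have sx : 0 < √x := Real.sqrt_pos.2 hx
  have sy : 0 < √y := Real.sqrt_pos.2 hy
  have sz : 0 < √z := Real.sqrt_pos.2 hz
  have sz' : 0 < √(1-z) := Real.sqrt_pos.2 a3
  have ex : √x^2 = x := Real.sq_sqrt hx.le
  have ey : √y^2 = y := Real.sq_sqrt hy.le
  have ez : √z^2 = z := Real.sq_sqrt hz.le
  have ez' : √(1-z)^2 = 1-z := Real.sq_sqrt a3.le
  calc _ ≤ 1 * (1 / (1 - z + x*y*z)) := by
        gcongr
        exact pow_le_one₀ (by positivity) hle
    _ ≤ 1/(√x*√y*√z*√(1-z)) := by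
        rw [one_mul]
        apply one_div_le_one_div_of_le (by positivity)
        have : (√x*√y*√z)^2 = x*y*z := by rw [mul_pow, mul_pow, ex, ey, ez]
        nlinarith [sq_nonneg (√x*√y*√z - √(1-z)), mul_pos (mul_pos (mul_pos sx sy) sz) sz']
    _ = _ := by field_simp

noncomputable def gn (n : ℕ) (p : (ℝ × ℝ) × ℝ) : ℝ :=
  (p.1.1^n * (1-p.1.1)^n * p.2^n / (1+p.1.1*p.2)^(n+1)) * (p.1.2^n * (1-p.1.2)^n / (p.1.2+p.2)^(n+1))

lemma subst_z (n : ℕ) {x y : ℝ} (hx : 0 < x) (hx1 : x < 1) (hy : 0 < y) (hy1 : y < 1) :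
    ∫ z, ff n (x, y, z) ∂mu = ∫ w, gn n ((x,y),w) ∂nu := by
  have himg : (fun w : ℝ => w/(y+w)) '' Set.Ioi 0 = Set.Ioo 0 1 := by
    ext z
    constructor
    · rintro ⟨w, hw, rfl⟩
      have hw : 0 < w := hw
      exact ⟨by positivity, by rw [div_lt_one (by positivity)]; linarith⟩
    · rintro ⟨h0, h1⟩
      have a : 0 < 1 - z := by linarith
      refine ⟨y*z/(1-z), ?_, ?_⟩
      · show 0 < y*z/(1-z)
        positivity
      · simp only; field_simp; ring
  have hinj : Set.InjOn (fun w : ℝ => w/(y+w)) (Set.Ioi 0) := by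
    intro a ha b hb hab
    have ha : 0 < a := ha
    have hb : 0 < b := hb
    simp only at hab
    rw [div_eq_div_iff (by positivity) (by positivity)] at hab
    have : y * a = y * b := by linarith
    exact mul_left_cancel₀ hy.ne' this
  have hder : ∀ w ∈ Set.Ioi (0:ℝ), HasDerivWithinAt (fun w : ℝ => w/(y+w)) (y/(y+w)^2) (Set.Ioi 0) w := by
    intro w hw
    have hw : 0 < w := hw
    have := (hasDerivAt_id w).div ((hasDerivAt_id w).const_add y) (by simp only [id]; positivity)
    refine (this.congr_deriv ?_).hasDerivWithinAt
    simp only [id]; ring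
  have key := integral_image_eq_integral_abs_deriv_smul measurableSet_Ioi hder hinj (fun z => ff n (x,y,z))
  rw [himg] at key
  rw [key]
  apply setIntegral_congr_fun measurableSet_Ioi
  intro w hw
  have hw : 0 < w := hw
  have p1 : 0 < y + w := by positivity
  have p2 : 0 < 1 + x * w := by positivity
  have e1 : 1 - w/(y+w) = y/(y+w) := by field_simp; ring
  have e2 : y/(y+w) + x * y * (w/(y+w)) = y*(1+x*w)/(y+w) := by field_simp
  simp only [smul_eq_mul]
  rw [abs_of_pos (by positivity)]
  unfold ff gn
  simp only
  rw [e1, e2]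
  have e3 : x * y * (w / (y + w)) * (1 - x) * (1 - y) * (y / (y + w)) / (y * (1 + x * w) / (y + w))
    = x * (1-x) * w / (1+x*w) * (y * (1-y) /(y+w)) := by field_simp
  rw [e3, mul_pow, div_pow, div_pow, mul_pow, mul_pow, mul_pow, pow_succ, pow_succ]
  field_simp
  ring

lemma int_gn (n : ℕ) : Integrable (gn n) mmn := by
  apply integrable_mmn
  · unfold gn; fun_prop
  · intro x y w hx hx1 hy hy1 hw
    unfold gn g0
    simp only
    have a1 : 0 < 1 - x := by linarith
    have a2 : 0 < 1 - y := by linarith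
    rw [abs_of_pos (by positivity)]
    have e : (x^n * (1-x)^n * w^n / (1+x*w)^(n+1)) * (y^n * (1-y)^n / (y+w)^(n+1))
      = ((x * w/(1+x*w)) * (1-x) * (y/(y+w)) * (1-y))^n * (1/((y+w)*(1+x*w))) := by
      simp only [mul_pow, div_pow, pow_succ]
      field_simp
    rw [e]
    have h1 : x*w/(1+x*w) ≤ 1 := by rw [div_le_one (by positivity)]; linarith
    have h2 : y/(y+w) ≤ 1 := by rw [div_le_one (by positivity)]; linarith
    have h3 : (x * w/(1+x*w)) * (1-x) * (y/(y+w)) * (1-y) ≤ 1 := by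
      have q1 := mul_le_one₀ h1 a1.le (by linarith : 1 - x ≤ 1)
      have q2 := mul_le_one₀ q1 (by positivity) h2
      exact mul_le_one₀ q2 a2.le (by linarith : 1 - y ≤ 1)
    calc _ ≤ 1 * (1/((y+w)*(1+x*w))) := by
          gcongr
          exact pow_le_one₀ (by positivity) h3
      _ = _ := one_mul _

lemma int_mono (k l : ℕ) : Integrable (fun p : (ℝ × ℝ) × ℝ => p.1.1^k * p.1.2^l * g0 p) mmn := by
  apply integrable_mmn
  · unfold g0; fun_prop
  · intro x y w hx hx1 hy hy1 hw
    have : 0 < g0 ((x,y),w) := by unfold g0; positivity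
    simp only
    rw [abs_of_pos (by positivity)]
    have h1 : x^k ≤ 1 := pow_le_one₀ hx.le hx1.le
    have h2 : y^l ≤ 1 := pow_le_one₀ hy.le hy1.le
    have h3 := mul_le_one₀ h1 (by positivity) h2
    nlinarith

lemma leg_eq (n : ℕ) (x : ℝ) : leg n x = ∑ k ∈ Finset.range (n+1), cf n k * x^k := aeval_legendre n x

lemma hsum (n : ℕ) (p : (ℝ × ℝ) × ℝ) : leg n p.1.1 * leg n p.1.2 * g0 p
    = ∑ k ∈ Finset.range (n+1), ∑ l ∈ Finset.range (n+1), cf n k * cf n l * (p.1.1^k * p.1.2^l * g0 p) := by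
  rw [leg_eq, leg_eq, Finset.sum_mul_sum, Finset.sum_mul]
  apply Finset.sum_congr rfl; intro k _
  rw [Finset.sum_mul]
  apply Finset.sum_congr rfl; intro l _
  ring

lemma int_hn (n : ℕ) : Integrable (fun p : (ℝ × ℝ) × ℝ => leg n p.1.1 * leg n p.1.2 * g0 p) mmn := by
  simp only [hsum]
  exact integrable_finsetSum _ fun k _ => integrable_finsetSum _ fun l _ => (int_mono k l).const_mul _

lemma chain (n : ℕ) : ∫ p, ff n p ∂(mu.prod (mu.prod mu))
    = ∑ k ∈ Finset.range (n+1), ∑ l ∈ Finset.range (n+1), cf n k * cf n l *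
        ∫ p, p.1.1^k * p.1.2^l * g0 p ∂mmn := by
  have mp := measurePreserving_prodAssoc mu mu mu
  have i1 : Integrable (fun p : (ℝ × ℝ) × ℝ => ff n (p.1.1, p.1.2, p.2)) ((mu.prod mu).prod mu) :=
    (mp.integrable_comp_emb MeasurableEquiv.prodAssoc.measurableEmbedding).2 (int_ff n)
  calc ∫ p, ff n p ∂(mu.prod (mu.prod mu))
      = ∫ p, ff n (p.1.1, p.1.2, p.2) ∂((mu.prod mu).prod mu) :=
        (mp.integral_comp MeasurableEquiv.prodAssoc.measurableEmbedding (ff n)).symm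
    _ = ∫ q, ∫ z, ff n (q.1, q.2, z) ∂mu ∂(mu.prod mu) := integral_prod _ i1
    _ = ∫ q, ∫ w, gn n (q, w) ∂nu ∂(mu.prod mu) := by
        apply integral_congr_ae
        apply ae_mm
        intro x y hx hx1 hy hy1
        exact subst_z n hx hx1 hy hy1
    _ = ∫ w, ∫ q, gn n (q, w) ∂(mu.prod mu) ∂nu := integral_integral_swap (int_gn n)
    _ = ∫ w, ∫ q, leg n q.1 * leg n q.2 * g0 (q, w) ∂(mu.prod mu) ∂nu := by
        apply setIntegral_congr_fun measurableSet_Ioi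
        intro w hw
        have hw : 0 < w := hw
        have e1 := integral_prod_mul (μ := mu) (ν := mu)
          (fun x : ℝ => x^n * (1-x)^n * w^n / (1+x*w)^(n+1)) (fun y : ℝ => y^n * (1-y)^n / (y+w)^(n+1))
        have e2 := integral_prod_mul (μ := mu) (ν := mu)
          (fun x : ℝ => leg n x / (1+x*w)) (fun y : ℝ => leg n y / (y+w))
        rw [← int_eq_mu, ← int_eq_mu] at e1 e2
        rw [parts n hw, parts' n hw] at e1
        have e3 := e1.trans e2.symm
        simp only
        calc _ = _ := e3
          _ = _ := by
            congr 1; ext q; unfold g0; simp only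
            rw [div_mul_div_comm, mul_comm (q.2 + w), mul_one_div]
    _ = ∫ p, leg n p.1.1 * leg n p.1.2 * g0 p ∂mmn := by
        rw [integral_prod_symm _ (int_hn n)]
    _ = _ := by
        simp only [hsum]
        rw [integral_finsetSum _ (fun k _ => integrable_finsetSum _ fun l _ => (int_mono k l).const_mul _)]
        apply Finset.sum_congr rfl; intro k _
        rw [integral_finsetSum _ (fun l _ => (int_mono k l).const_mul _)]
        apply Finset.sum_congr rfl; intro l _
        rw [integral_const_mul]

lemma log_deriv_aux (a : ℕ) {x : ℝ} (hx : 0 < x) :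
    HasDerivAt (fun x : ℝ => -(x^a * (x * Real.log x))/(a+1) + x^(a+1)/((a:ℝ)+1)^2) (-Real.log x * x^a) x := by
  have h1 := (hasDerivAt_pow (a+1) x).mul (Real.hasDerivAt_log hx.ne')
  have h2 := (h1.neg.div_const ((a:ℝ)+1)).add ((hasDerivAt_pow (a+1) x).div_const (((a:ℝ)+1)^2))
  have e : (fun x : ℝ => -(x^a * (x * Real.log x))/(a+1) + x^(a+1)/((a:ℝ)+1)^2)
    = (fun x : ℝ => -(x^(a+1) * Real.log x)/(a+1) + x^(a+1)/((a:ℝ)+1)^2) := by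
    ext x; ring
  rw [e]
  refine h2.congr_deriv ?_
  have : (a:ℝ) + 1 ≠ 0 := by positivity
  simp only [Nat.add_sub_cancel]
  push_cast
  field_simp
  ring

lemma int_log (a : ℕ) : IntervalIntegrable (fun x : ℝ => -Real.log x * x^a) volume 0 1 :=
  (intervalIntegral.intervalIntegrable_log'.neg).mul_continuousOn (by fun_prop)

lemma log_int (a : ℕ) : ∫ x, -Real.log x * x^a ∂mu = 1/((a:ℝ)+1)^2 := by
  rw [← int_eq_mu, intervalIntegral.integral_eq_sub_of_hasDerivAt_of_le zero_le_one ?_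
    (fun x hx => log_deriv_aux a hx.1) (int_log a)]
  · simp
  · apply Continuous.continuousOn
    have := Real.continuous_mul_log
    fun_prop

lemma pow_int (a : ℕ) : ∫ x, x^a ∂mu = 1/((a:ℝ)+1) := by
  rw [← int_eq_mu]; simp

lemma int_pow (a : ℕ) : Integrable (fun x : ℝ => x^a) mu :=
  mu_of_interval (Continuous.intervalIntegrable (by fun_prop) _ _)

open Filter Topology in
lemma w_int {x y : ℝ} (hx : 0 < x) (hx1 : x < 1) (hy : 0 < y) (hy1 : y < 1) :
    ∫ w, g0 ((x,y),w) ∂nu = (-Real.log x - Real.log y) / (1 - x*y) := by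
  have hxy : 0 < 1 - x*y := by nlinarith
  have key := integral_Ioi_of_hasDerivAt_of_nonneg' (a := (0:ℝ))
    (g := fun w => Real.log ((y+w)/(1+x*w)) / (1-x*y)) (g' := fun w => g0 ((x,y),w))
    (l := Real.log (1/x) / (1-x*y)) ?_ ?_ ?_
  · rw [key]
    simp
    ring
  · intro w hw
    have hw : 0 ≤ w := hw
    have p1 : 0 < y + w := by positivity
    have p2 : 0 < 1 + x * w := by positivity
    have h := ((((hasDerivAt_id w).const_add y).div (((hasDerivAt_id w).const_mul x).const_add 1)
      (by simp only [id]; positivity)).log (by simp only [id, Pi.div_apply]; positivity)).div_const (1-x*y)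
    refine h.congr_deriv ?_
    simp only [id, g0, Pi.div_apply]
    field_simp
    ring
  · intro w hw
    have hw : 0 < w := hw
    unfold g0; positivity
  · refine Tendsto.div_const ?_ _
    refine Tendsto.log ?_ (by positivity)
    have hinv : Tendsto (fun t : ℝ => 1/t) atTop (𝓝 0) := by
      simpa using tendsto_inv_atTop_zero (𝕜 := ℝ)
    have : Tendsto (fun w : ℝ => (y * (1/w) + 1)/(1/w + x)) atTop (𝓝 ((y*0+1)/(0+x))) :=
      ((hinv.const_mul y).add_const 1).div (hinv.add_const x) (by simpa using hx.ne')
    simp only [mul_zero, zero_add] at this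
    refine this.congr' ?_
    filter_upwards [eventually_gt_atTop 0] with w hw
    have p2 : 0 < 1 + x * w := by positivity
    field_simp

noncomputable def tt (k l j : ℕ) : ℝ :=
  1/((j:ℝ)+1+k)^2 * (1/((j:ℝ)+1+l)) + 1/((j:ℝ)+1+k) * (1/((j:ℝ)+1+l)^2)

noncomputable def fj (k l j : ℕ) (q : ℝ × ℝ) : ℝ :=
  (-Real.log q.1 * q.1^(j+k)) * q.2^(j+l) + q.1^(j+k) * (-Real.log q.2 * q.2^(j+l))

lemma fj_int (k l j : ℕ) : Integrable (fj k l j) (mu.prod mu) := by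
  exact ((mu_of_interval (int_log (j+k))).mul_prod (int_pow (j+l))).add
    ((int_pow (j+k)).mul_prod (mu_of_interval (int_log (j+l))))

lemma fj_integral (k l j : ℕ) : ∫ q, fj k l j q ∂(mu.prod mu) = tt k l j := by
  unfold fj
  rw [integral_add ((mu_of_interval (int_log (j+k))).mul_prod (int_pow (j+l)))
    ((int_pow (j+k)).mul_prod (mu_of_interval (int_log (j+l))))]
  rw [integral_prod_mul (fun x : ℝ => -Real.log x * x^(j+k)) (fun y : ℝ => y^(j+l)),
    integral_prod_mul (fun x : ℝ => x^(j+k)) (fun y : ℝ => -Real.log y * y^(j+l)),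
    log_int, log_int, pow_int, pow_int]
  unfold tt
  push_cast
  rw [show (j:ℝ) + k + 1 = j + 1 + k by ring, show (j:ℝ) + l + 1 = j + 1 + l by ring]

lemma tt_summable (k l : ℕ) : Summable (tt k l) := by
  have h : Summable (fun j : ℕ => 2 * (1/((j:ℝ)+1)^2)) := by
    have := (summable_nat_add_iff 1).2 (Real.summable_one_div_nat_pow.2 (by norm_num : 1 < 2))
    simpa using this.mul_left 2
  refine Summable.of_nonneg_of_le (fun j => by unfold tt; positivity) (fun j => ?_) h
  unfold tt
  have hj : (0:ℝ) < (j:ℝ) + 1 := by positivity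
  have a1 : 1/((j:ℝ)+1+k)^2 ≤ 1/((j:ℝ)+1)^2 := by
    apply one_div_le_one_div_of_le (by positivity); exact pow_le_pow_left₀ hj.le (by linarith [(Nat.cast_nonneg k : (0:ℝ) ≤ k)]) 2
  have a2 : 1/((j:ℝ)+1+l)^2 ≤ 1/((j:ℝ)+1)^2 := by
    apply one_div_le_one_div_of_le (by positivity); exact pow_le_pow_left₀ hj.le (by linarith [(Nat.cast_nonneg l : (0:ℝ) ≤ l)]) 2
  have b1 : ∀ m : ℕ, 1/((j:ℝ)+1+m) ≤ 1 := by
    intro m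
    rw [div_le_one (by positivity)]
    linarith [(Nat.cast_nonneg m : (0:ℝ) ≤ m), (Nat.cast_nonneg j : (0:ℝ) ≤ j)]
  have c1 : 1/((j:ℝ)+1+k)^2 * (1/((j:ℝ)+1+l)) ≤ 1/((j:ℝ)+1)^2 * 1 := by
    gcongr; exact b1 l
  have c2 : 1/((j:ℝ)+1+k) * (1/((j:ℝ)+1+l)^2) ≤ 1 * (1/((j:ℝ)+1)^2) := by
    gcongr; exact b1 k
  linarith

lemma I_hasSum (k l : ℕ) : HasSum (tt k l) (∫ p, p.1.1^k * p.1.2^l * g0 p ∂mmn) := by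
  have h := hasSum_integral_of_summable_integral_norm (μ := mu.prod mu) (F := fj k l) (fj_int k l) ?_
  · simp only [fj_integral] at h
    have e0 : (∫ p, p.1.1^k * p.1.2^l * g0 p ∂mmn) = ∫ q, ∑' j, fj k l j q ∂(mu.prod mu) := by
      rw [integral_prod _ (int_mono k l)]
      apply integral_congr_ae
      apply ae_mm
      intro x y hx hx1 hy hy1
      simp only
      rw [integral_const_mul, w_int hx hx1 hy hy1]
      have hxy : 0 < 1 - x*y := by nlinarith
      have hg := (hasSum_geometric_of_lt_one (by positivity : 0 ≤ x*y) (by linarith : x*y < 1)).mul_left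
        (x^k * y^l * (-Real.log x - Real.log y))
      have e : (fun j => fj k l j (x,y)) = fun j => x^k * y^l * (-Real.log x - Real.log y) * (x*y)^j := by
        ext j; unfold fj; simp only; ring
      rw [e, hg.tsum_eq]
      ring
    rw [e0]; exact h
  · have : ∀ j, ∫ q, ‖fj k l j q‖ ∂(mu.prod mu) = tt k l j := by
      intro j
      rw [← fj_integral]
      apply integral_congr_ae
      apply ae_mm
      intro x y hx hx1 hy hy1
      apply Real.norm_of_nonneg
      have l1 := Real.log_neg hx hx1
      have l2 := Real.log_neg hy hy1
      have l1' : 0 < -Real.log x := by linarith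
      have l2' : 0 < -Real.log y := by linarith
      unfold fj
      simp only
      positivity
    simp only [this]
    exact tt_summable k l

lemma J_hasSum (n : ℕ) : HasSum (fun j : ℕ => ss n ((j:ℝ)+1)) (∫ p, ff n p ∂(mu.prod (mu.prod mu))) := by
  rw [chain]
  have h := hasSum_sum (s := Finset.range (n+1)) fun k _ => hasSum_sum (s := Finset.range (n+1)) fun l _ =>
    (I_hasSum k l).mul_left (cf n k * cf n l)
  have e0 : (fun j : ℕ => ss n ((j:ℝ)+1)) = fun j => ∑ k ∈ Finset.range (n+1), ∑ l ∈ Finset.range (n+1),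
      cf n k * cf n l * tt k l j := by
    ext j
    have e1 : ss n ((j:ℝ)+1) = qq n (j+1) * rr n (j+1) + rr n (j+1) * qq n (j+1) := by unfold ss; ring
    rw [e1]
    unfold rr qq
    rw [Finset.sum_mul_sum, Finset.sum_mul_sum, ← Finset.sum_add_distrib]
    apply Finset.sum_congr rfl; intro k _
    rw [← Finset.sum_add_distrib]
    apply Finset.sum_congr rfl; intro l _
    unfold tt
    ring
  rw [e0]; exact h

/-- Beukers' integral representation: for all `n ≥ 0`,
`A_n ζ(3) - B_n = (1/2) ∫₀¹∫₀¹∫₀¹ (xyz(1-x)(1-y)(1-z)/(1-z+xyz))ⁿ dx dy dz /(1-z+xyz)`,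
the triple integral over the open unit cube being convergent. -/
theorem apery_integral_representation (n : ℕ) :
    IntegrableOn
      (fun p : ℝ × ℝ × ℝ =>
        (p.1 * p.2.1 * p.2.2 * (1 - p.1) * (1 - p.2.1) * (1 - p.2.2) /
            (1 - p.2.2 + p.1 * p.2.1 * p.2.2)) ^ n *
          (1 / (1 - p.2.2 + p.1 * p.2.1 * p.2.2)))
      (Set.Ioo (0:ℝ) 1 ×ˢ Set.Ioo (0:ℝ) 1 ×ˢ Set.Ioo (0:ℝ) 1) ∧
    (aperyA n : ℝ) * (∑' m : ℕ, 1 / ((m : ℝ) + 1) ^ 3) - (aperyB n : ℝ)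
      = (1 / 2) * ∫ p in Set.Ioo (0:ℝ) 1 ×ˢ Set.Ioo (0:ℝ) 1 ×ˢ Set.Ioo (0:ℝ) 1,
          (p.1 * p.2.1 * p.2.2 * (1 - p.1) * (1 - p.2.1) * (1 - p.2.2) /
              (1 - p.2.2 + p.1 * p.2.1 * p.2.2)) ^ n *
            (1 / (1 - p.2.2 + p.1 * p.2.1 * p.2.2)) := by
  refine ⟨?_, ?_⟩
  · have h := int_ff n
    rw [← cube_eq] at h
    exact h
  · have h := series_main _ J_hasSum n
    rw [← cube_eq] at h
    have h2 : (aperyA n : ℝ) * (∑' m : ℕ, 1 / ((m : ℝ) + 1) ^ 3) - (aperyB n : ℝ)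
      = (1/2) * ∫ p in Set.Ioo (0:ℝ) 1 ×ˢ Set.Ioo (0:ℝ) 1 ×ˢ Set.Ioo (0:ℝ) 1, ff n p := by
      rw [h]; ring
    exact h2
end

section
/- Let d_n denote the least common multiple of the integers 1, 2, …, n. Then for every integer n ≥ 1, the rational number d_n³ · B_n is an integer. -/
/-- The subring of integers inside `ℚ`. -/
abbrev ratInts : Subring ℚ := (Int.castRingHom ℚ).range

theorem nat_mem_ratInts (a : ℕ) : (a : ℚ) ∈ ratInts := ⟨(a : ℤ), by simp⟩

theorem div_mem_ratInts {a b : ℕ} (h : a ∣ b) : (b : ℚ) / a ∈ ratInts := by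
  rw [← Nat.cast_div_charZero h]
  exact nat_mem_ratInts _

theorem dvd_dn {n k : ℕ} (h1 : 1 ≤ k) (hk : k ≤ n) : k ∣ (Finset.Icc 1 n).lcm id :=
  Finset.dvd_lcm (f := id) (Finset.mem_Icc.2 ⟨h1, hk⟩)

/-- The recurrence of the Leibniz harmonic triangle. -/
theorem leibniz_step (k m : ℕ) (h : m + 1 ≤ k) :
    (1 : ℚ) / ((m + 2 : ℕ) * ((k + 1).choose (m + 2) : ℕ)) =
      1 / ((m + 1 : ℕ) * (k.choose (m + 1) : ℕ)) -
        1 / ((m + 1 : ℕ) * ((k + 1).choose (m + 1) : ℕ)) := by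
  have h1 : ((k + 1 : ℕ) : ℚ) * (k.choose (m + 1) : ℕ) =
      ((k + 1).choose (m + 2) : ℕ) * ((m + 2 : ℕ) : ℚ) := by
    exact_mod_cast Nat.add_one_mul_choose_eq k (m + 1)
  have h2 : ((k + 1 : ℕ) : ℚ) * (k.choose m : ℕ) =
      ((k + 1).choose (m + 1) : ℕ) * ((m + 1 : ℕ) : ℚ) := by
    exact_mod_cast Nat.add_one_mul_choose_eq k m
  have h3 : ((k + 1).choose (m + 1) : ℚ) = (k.choose m : ℕ) + (k.choose (m + 1) : ℕ) := by
    exact_mod_cast Nat.choose_succ_succ k m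
  have p1 : (k.choose (m + 1) : ℚ) ≠ 0 := by
    exact_mod_cast (Nat.choose_pos h).ne'
  have p2 : ((k + 1).choose (m + 1) : ℚ) ≠ 0 := by
    exact_mod_cast (Nat.choose_pos (by omega)).ne'
  have q1 : ((m + 1 : ℕ) : ℚ) ≠ 0 := by positivity
  have q2 : ((k + 1 : ℕ) : ℚ) ≠ 0 := by positivity
  rw [mul_comm ((m + 2 : ℕ) : ℚ), ← h1]
  field_simp
  linear_combination (-1 : ℚ) * h2 + ((k + 1 : ℕ) : ℚ) * -h3

theorem dn_div_mem (n m : ℕ) : ∀ k, m + 1 ≤ k → k ≤ n →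
    (((Finset.Icc 1 n).lcm id : ℕ) : ℚ) * (1 / ((m + 1 : ℕ) * (k.choose (m + 1) : ℕ)))
      ∈ ratInts := by
  induction m with
  | zero =>
    intro k h1 h2
    have := div_mem_ratInts (dvd_dn h1 h2)
    simpa [div_eq_mul_inv] using this
  | succ m ih =>
    intro k h1 h2
    obtain ⟨k, rfl⟩ : ∃ j, k = j + 1 := ⟨k - 1, by omega⟩
    have := leibniz_step k m (by omega)
    rw [show m + 1 + 1 = m + 2 from rfl, this, mul_sub]
    exact sub_mem (ih k (by omega) (by omega)) (ih (k + 1) (by omega) h2)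

theorem even_prod (n l : ℕ) (hl : 1 ≤ l) (hn : l ≤ n) :
    2 ∣ n.choose l * (n + l).choose l := by
  have h := Nat.choose_mul (n := n + l) (k := 2 * l) (s := l) (by omega)
  rw [show n + l - l = n by omega, show 2 * l - l = l by omega] at h
  rw [mul_comm, ← h]
  exact Dvd.dvd.mul_left (Nat.two_dvd_centralBinom_of_one_le hl) _

theorem choose_swap (n l m : ℕ) (hm : m ≤ l) :
    (n + l).choose (n + m) * (n + m).choose m = (n + l).choose l * l.choose m := by
  have h := Nat.choose_mul (n := n + l) (k := n + m) (s := n) (by omega)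
  rw [show n + l - n = l by omega, show n + m - n = m by omega] at h
  rwa [Nat.choose_symm_add, Nat.choose_symm_add] at h

theorem term_mem (n l m : ℕ) (hm : 1 ≤ m) (hml : m ≤ l) (hln : l ≤ n) :
    ((((Finset.Icc 1 n).lcm id : ℕ) : ℚ) ^ 3) *
      (((n.choose l : ℚ)) ^ 2 * (((n + l).choose l : ℚ)) ^ 2 *
        ((-1 : ℚ) ^ m / (2 * (m : ℚ) ^ 3 * (n.choose m : ℚ) * ((n + m).choose m : ℚ))))
      ∈ ratInts := by
  obtain ⟨j, rfl⟩ : ∃ j, m = j + 1 := ⟨m - 1, by omega⟩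
  have a1 := dn_div_mem n j n (by omega) le_rfl
  have a2 := dn_div_mem n j l hml hln
  have a3 := div_mem_ratInts (dvd_dn (n := n) hm (by omega))
  have a4 := div_mem_ratInts (even_prod n l (by omega) hln)
  have a5 := nat_mem_ratInts (n.choose l)
  have a6 := nat_mem_ratInts ((n + l).choose (n + (j + 1)))
  have a7 : (-1 : ℚ) ^ (j + 1) ∈ ratInts := pow_mem (neg_mem (one_mem _)) _
  have key : ((n + l).choose (n + (j + 1)) : ℚ) * ((n + (j + 1)).choose (j + 1) : ℕ) =
      ((n + l).choose l : ℕ) * (l.choose (j + 1) : ℕ) := by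
    exact_mod_cast choose_swap n l (j + 1) hml
  have p1 : (n.choose (j + 1) : ℚ) ≠ 0 := by
    exact_mod_cast (Nat.choose_pos (by omega)).ne'
  have p2 : (l.choose (j + 1) : ℚ) ≠ 0 := by
    exact_mod_cast (Nat.choose_pos (by omega)).ne'
  have p3 : ((n + (j + 1)).choose (j + 1) : ℚ) ≠ 0 := by
    exact_mod_cast (Nat.choose_pos (by omega)).ne'
  have q1 : ((j + 1 : ℕ) : ℚ) ≠ 0 := by positivity
  have := mul_mem (mul_mem (mul_mem (mul_mem (mul_mem (mul_mem a1 a2) a3) a4) a5) a6) a7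
  convert this using 1
  have e : ((n + l).choose (n + (j + 1)) : ℚ) =
      ((n + l).choose l : ℕ) * (l.choose (j + 1) : ℕ) / ((n + (j + 1)).choose (j + 1) : ℕ) := by
    rw [eq_div_iff p3, key]
  rw [e, Nat.cast_mul]
  generalize ((j + 1 : ℕ) : ℚ) = M at *
  field_simp
  try push_cast
  try ring

/-- The denominator bound in Apéry's proof: with `d_n = lcm[1, 2, …, n]`, the rational
number `d_n³ · B_n` is an integer, for every `n ≥ 1`. -/
theorem aperyB_denominator (n : ℕ) (hn : 1 ≤ n) :
    ∃ z : ℤ, ((((Finset.Icc 1 n).lcm id : ℕ) : ℚ) ^ 3) * aperyB n = (z : ℚ) := by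
  suffices h : ((((Finset.Icc 1 n).lcm id : ℕ) : ℚ) ^ 3) * aperyB n ∈ ratInts by
    obtain ⟨z, hz⟩ := h
    exact ⟨z, by rw [← hz]; simp⟩
  unfold aperyB
  rw [Finset.mul_sum]
  refine sum_mem fun l hl => ?_
  have hl' : l ≤ n := by simpa [Nat.lt_succ_iff] using hl
  rw [mul_sub, mul_sub]
  refine sub_mem ?_ ?_
  · rw [mul_left_comm, Finset.mul_sum]
    refine mul_mem (mul_mem (pow_mem (nat_mem_ratInts _) _) (pow_mem (nat_mem_ratInts _) _))
      (sum_mem fun m hm => ?_)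
    rw [Finset.mem_Icc] at hm
    have := pow_mem (div_mem_ratInts (dvd_dn hm.1 hm.2)) 3
    rwa [div_pow, div_eq_mul_one_div] at this
  · rw [Finset.mul_sum, Finset.mul_sum]
    refine sum_mem fun m hm => ?_
    rw [Finset.mem_Icc] at hm
    exact term_mem n l m hm.1 hm.2 hl'
end
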